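/- arXiv:1511.02567 — 5 statements merged into one kernel-verified Lean document; each statement's English description precedes it below -/
import Mathlib

section
/- Let k ≥ l ≥ m ≥ 1 be integers with l ≥ 2, and suppose m > √(2k+2l−4). Then for the parameters a₁ = k/(2(k+l+m−2)), a₂ = l/(2(k+l+m−2)), a₃ = m/(2(k+l+m−2)), the set of Einstein solutions (x₁,x₂,x₃) normalized by x₁+x₂+x₃ = 1 has exactly 4 elements; i.e., the generalized Wallach space SO(k+l+m)/SO(k)×SO(l)×SO(m) admits exactly 4 invariant Einstein metrics up to homothety. -/
/-!
The Einstein equations say that three quadratic forms `Q₁, Q₂, Q₃` in `x` agree.  Put `K = k + l`,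
`e = k - l`, `P = 2 (k + l + m - 2)`, and use the affine coordinates `s = (x₁ + x₂) / x₃`,
`d = (x₁ - x₂) / x₃`.  Then `Q₁ = Q₂` becomes the hyperbola `d (K s - P) = e`, the equation
`Q₁ + Q₂ = 2 Q₃` becomes a second conic, and positivity of `x` becomes `|d| < s`
(`ncard_normalizedEinstein`).

If `e = 0`, the hyperbola degenerates into the lines `d = 0` and `s = P / K`.  Each carries two
solutions: on the first the discriminant is positive exactly when `m ^ 2 > 2 (k + l - 2)`
(`ncard_conicSet_of_eq`).

If `e > 0`, the hyperbola is parametrized by `T = P - K s`, `d = -e / T`, and the second conic turns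
into a quartic `F(T) = 0`, so there are at most four solutions.  The values `T = e, -e, P - K`
correspond to `d = -1`, `d = 1`, `s = 1`; these points would be solutions (the Kähler–Einstein
metrics) if `a₁ + a₂ + a₃` were equal to `1/2`, and they are used here as test points.  One finds
`F(-P) < 0`, `F(-e) > 0`, `F(e) > 0`, `F(k) < 0`, `F(T₀) > 0`, `F(P - K) < 0`, where `T₀`
corresponds to `s = 1 / (1 - 2 a₃)`.  The hypothesis on `m` enters at `k` and at `T₀`.  Hence there
is a root in `(-P, -e)` and one in each of `(e, k)`, `(k, T₀)`, `(T₀, P - K)`, and on these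
intervals the condition `|d| < s` is automatic (`ncard_conicSet_of_lt`).
-/

noncomputable section

/-- The pair of Einstein equations together with positivity of the metric components. -/
def isEinstein (a₁ a₂ a₃ x₁ x₂ x₃ : ℝ) : Prop :=
  0 < x₁ ∧ 0 < x₂ ∧ 0 < x₃ ∧
  (a₂ + a₃) * (a₁ * x₂ ^ 2 + a₁ * x₃ ^ 2 - x₂ * x₃) + (a₂ * x₂ + a₃ * x₃) * x₁
    - (a₁ * a₂ + a₁ * a₃ + 2 * a₂ * a₃) * x₁ ^ 2 = 0 ∧
  (a₁ + a₃) * (a₂ * x₁ ^ 2 + a₂ * x₃ ^ 2 - x₁ * x₃) + (a₁ * x₁ + a₃ * x₃) * x₂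
    - (a₁ * a₂ + 2 * a₁ * a₃ + a₂ * a₃) * x₂ ^ 2 = 0

/-- Einstein solutions normalized by `x₁ + x₂ + x₃ = 1`. -/
def normalizedEinstein (a₁ a₂ a₃ : ℝ) : Set (ℝ × ℝ × ℝ) :=
  {x | isEinstein a₁ a₂ a₃ x.1 x.2.1 x.2.2 ∧ x.1 + x.2.1 + x.2.2 = 1}

/-- The Einstein equations on the chart `x₃ = 1`, as a pair of conics in `s = x₁ + x₂` and
`d = x₁ - x₂`; the condition `|d| < s` is positivity of `x₁` and `x₂`.  Denominators are cleared,
so that the coefficients are polynomials in `k, l, m`. -/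
def conicSet (k l m : ℝ) : Set (ℝ × ℝ) :=
  {p | |p.2| < p.1 ∧ p.2 * ((k + l) * p.1 - 2 * (k + l + m - 2)) = k - l ∧
    (k + l + 2 * m - 2) * p.2 ^ 2 + (k - l) * p.2 * p.1 - (k + l - 2) * p.1 ^ 2
      + 2 * (k + l + m - 2) * p.1 - (k + l + 2 * m) = 0}

/-- The equations of `isEinstein` are invertible linear combinations of `Q₁ = Q₂` and
`Q₁ + Q₂ = 2 Q₃`. -/
lemma isEinstein_iff {k l m : ℝ} (hk : 0 < k) (hl : 0 < l) (hm : 0 < m)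
    (hP : 0 < k + l + m - 2) (x y z : ℝ) :
    isEinstein (k / (2 * (k + l + m - 2))) (l / (2 * (k + l + m - 2)))
      (m / (2 * (k + l + m - 2))) x y z ↔
    0 < x ∧ 0 < y ∧ 0 < z ∧
      (x - y) * ((k + l) * (x + y) - 2 * (k + l + m - 2) * z) = (k - l) * z ^ 2 ∧
      2 * (k + l + m - 2) * z * (x + y) + (k - l) * (x ^ 2 - y ^ 2) - (k + l + 2 * m) * z ^ 2
        - 4 * (k + l + m - 2) * x * y + 2 * m * (x ^ 2 + y ^ 2) = 0 := by
  set P := 2 * (k + l + m - 2) with hPdef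
  have hP' : 0 < P := by positivity
  have e1 : (l / P + m / P) * (k / P * y ^ 2 + k / P * z ^ 2 - y * z) + (l / P * y + m / P * z) * x
      - (k / P * (l / P) + k / P * (m / P) + 2 * (l / P) * (m / P)) * x ^ 2
      = ((l + m) * (k * y ^ 2 + k * z ^ 2 - P * (y * z)) + P * ((l * y + m * z) * x)
      - (k * l + k * m + 2 * l * m) * x ^ 2) / P ^ 2 := by
    field_simp
  have e2 : (k / P + m / P) * (l / P * x ^ 2 + l / P * z ^ 2 - x * z) + (k / P * x + m / P * z) * y
      - (k / P * (l / P) + 2 * (k / P) * (m / P) + l / P * (m / P)) * y ^ 2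
      = ((k + m) * (l * x ^ 2 + l * z ^ 2 - P * (x * z)) + P * ((k * x + m * z) * y)
      - (k * l + 2 * k * m + l * m) * y ^ 2) / P ^ 2 := by
    field_simp
  have hP2 : P ^ 2 ≠ 0 := by positivity
  unfold isEinstein
  rw [e1, e2, div_eq_zero_iff, div_eq_zero_iff]
  simp only [hP2, or_false]
  refine and_congr_right fun _ => and_congr_right fun _ => and_congr_right fun _ => ?_
  -- the determinant of the change between the two pairs of equations
  have hD : k * m + l * (k + m) ≠ 0 := by positivity
  constructor
  · rintro ⟨h1, h2⟩
    have hp : (x - y) * ((k + l) * (x + y) - P * z) = (k - l) * z ^ 2 := by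
      have : (k * m + l * (k + m)) *
          ((x - y) * ((k + l) * (x + y) - P * z) - (k - l) * z ^ 2) = 0 := by
        linear_combination (-k) * h1 + l * h2
      rcases mul_eq_zero.1 this with h | h
      · exact absurd h hD
      · linarith
    refine ⟨hp, ?_⟩
    have : (k * m + l * (k + m)) *
        (P * z * (x + y) + (k - l) * (x ^ 2 - y ^ 2) - (k + l + 2 * m) * z ^ 2
        - 4 * (k + l + m - 2) * x * y + 2 * m * (x ^ 2 + y ^ 2)) = 0 := by
      linear_combination (-(k + 2 * m)) * h1 - (l + 2 * m) * h2
    rcases mul_eq_zero.1 this with h | h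
    · exact absurd h hD
    · exact h
  · rintro ⟨h1, h2⟩
    constructor
    · linear_combination (-(2 * m + l) / 2) * h1 - l / 2 * h2
    · linear_combination ((2 * m + k) / 2) * h1 - k / 2 * h2

lemma ncard_normalizedEinstein {k l m : ℝ} (hk : 0 < k) (hl : 0 < l) (hm : 0 < m)
    (hP : 0 < k + l + m - 2) :
    (normalizedEinstein (k / (2 * (k + l + m - 2))) (l / (2 * (k + l + m - 2)))
      (m / (2 * (k + l + m - 2)))).ncard = (conicSet k l m).ncard := by
  set φ : ℝ × ℝ → ℝ × ℝ × ℝ := fun p =>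
    ((p.1 + p.2) / (2 * (p.1 + 1)), (p.1 - p.2) / (2 * (p.1 + 1)), 1 / (p.1 + 1)) with hφ
  have hinj : Set.InjOn φ (conicSet k l m) := by
    rintro ⟨s, d⟩ ⟨hs, -⟩ ⟨s', d'⟩ ⟨hs', -⟩ h
    simp only [hφ, Prod.mk.injEq] at h hs hs'
    obtain ⟨h1, -, h3⟩ := h
    have p1 : 0 < s := (abs_nonneg _).trans_lt hs
    have p2 : 0 < s' := (abs_nonneg _).trans_lt hs'
    have hss : s = s' := by
      have := (div_eq_div_iff (by positivity) (by positivity)).1 h3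
      linarith
    subst hss
    have := (div_left_inj' (by positivity)).1 h1
    rw [Prod.mk.injEq]
    exact ⟨rfl, by linarith⟩
  rw [← hinj.ncard_image]
  congr 1
  ext ⟨x, y, z⟩
  constructor
  · rintro ⟨h, hsum⟩
    simp only at h hsum
    obtain ⟨hx, hy, hz, h1, h2⟩ := (isEinstein_iff hk hl hm hP x y z).1 h
    refine ⟨((x + y) / z, (x - y) / z), ⟨?_, ?_, ?_⟩, ?_⟩
    · simp only [abs_div, abs_of_pos hz]
      apply div_lt_div_of_pos_right _ hz
      rw [abs_lt]; constructor <;> linarith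
    · simp only
      field_simp
      linear_combination h1
    · simp only
      field_simp
      linear_combination h2
    · have hs : (x + y) / z + 1 = 1 / z := by
        field_simp; exact hsum
      simp only [hφ, hs, Prod.mk.injEq]
      refine ⟨?_, ?_, ?_⟩ <;> field_simp <;> ring
  · rintro ⟨⟨s, d⟩, ⟨hs, h1, h2⟩, h⟩
    simp only [hφ, Prod.mk.injEq] at h hs h1 h2
    obtain ⟨rfl, rfl, rfl⟩ := h
    have p1 : 0 < s := (abs_nonneg _).trans_lt hs
    rw [abs_lt] at hs
    refine ⟨(isEinstein_iff hk hl hm hP _ _ _).2 ⟨?_, ?_, ?_, ?_, ?_⟩, ?_⟩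
    · exact div_pos (by linarith) (by positivity)
    · exact div_pos (by linarith) (by positivity)
    · positivity
    · simp only
      field_simp
      linear_combination 4 * h1
    · simp only
      field_simp
      linear_combination 4 * h2
    · simp only
      field_simp
      ring

/-- The degenerate case `k = l`: two solutions with `x₁ = x₂`, and two with
`(a₁ + a₂) (x₁ + x₂) = x₃` that are exchanged by swapping `x₁` and `x₂`. -/
lemma ncard_conicSet_of_eq {k m : ℝ} (hm3 : 3 ≤ m) (hmk : m ≤ k)
    (hsq : 2 * (k + k) - 4 < m ^ 2) : (conicSet k k m).ncard = 4 := by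
  set r := √(m ^ 2 - 2 * (k + k) + 4) with hr
  have hr0 : 0 < r := Real.sqrt_pos.2 (by linarith)
  have hr2 : r ^ 2 = m ^ 2 - 2 * (k + k) + 4 := Real.sq_sqrt (by linarith)
  have hrm : r < m := by nlinarith
  have hq : 0 < 2 * k - 2 := by linarith
  have hk : 0 < k := by linarith
  set w := (2 * k + m - 2) / k with hw
  have hwk : w * k = 2 * k + m - 2 := by rw [hw]; field_simp
  have hw1 : 1 < w := by rw [hw, lt_div_iff₀ hk]; linarith
  have hc : 0 < 2 * k + 2 * m - 2 := by linarith
  have hw2 : w ^ 2 < k + m := by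
    rw [hw, div_pow, div_lt_iff₀ (by positivity)]
    obtain ⟨z, hz, rfl⟩ : ∃ z, 0 ≤ z ∧ m = 3 + z := ⟨m - 3, by linarith, by ring⟩
    obtain ⟨c, hc, rfl⟩ : ∃ c, 0 ≤ c ∧ k = 3 + z + c := ⟨k - 3 - z, by linarith, by ring⟩
    rw [← sub_pos]
    ring_nf
    positivity
  set D := √((2 * k + 2 * m - 2 * w ^ 2) / (2 * k + 2 * m - 2)) with hD
  have hD0 : 0 < D := Real.sqrt_pos.2 (div_pos (by linarith) hc)
  have hD2 : D ^ 2 * (2 * k + 2 * m - 2) = 2 * k + 2 * m - 2 * w ^ 2 := by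
    rw [hD, Real.sq_sqrt (div_nonneg (by linarith) hc.le), div_mul_cancel₀ _ hc.ne']
  have hDw : D < w := by
    have : D ^ 2 < w ^ 2 := by
      by_contra! h
      nlinarith
    exact lt_of_pow_lt_pow_left₀ 2 (by linarith) this
  have key : conicSet k k m =
      {((2 * k + m - 2 + r) / (2 * k - 2), 0), ((2 * k + m - 2 - r) / (2 * k - 2), 0),
        (w, D), (w, -D)} := by
    ext ⟨s, d⟩
    simp only [conicSet, Set.mem_ofPred_eq, Set.mem_insert_iff, Set.mem_singleton_iff,
      Prod.mk.injEq]
    constructor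
    · rintro ⟨-, h1, h2⟩
      have h1' : d * (s - w) = 0 := by
        have : k * (d * (s - w)) = 0 := by linear_combination h1 / 2 - d * hwk
        exact (mul_eq_zero.1 this).resolve_left hk.ne'
      rcases mul_eq_zero.1 h1' with rfl | h
      · have : ((2 * k - 2) * s - (2 * k + m - 2 + r)) * ((2 * k - 2) * s - (2 * k + m - 2 - r))
            = 0 := by
          linear_combination (-(2 * k - 2)) * h2 - hr2
        rcases mul_eq_zero.1 this with h | h
        · left; refine ⟨?_, rfl⟩; rw [eq_div_iff hq.ne']; linarith
        · right; left; refine ⟨?_, rfl⟩; rw [eq_div_iff hq.ne']; linarith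
      · obtain rfl : s = w := by linarith
        have : (2 * k + 2 * m - 2) * ((d - D) * (d + D)) = 0 := by
          linear_combination h2 - hD2 + 2 * w * hwk
        rcases mul_eq_zero.1 ((mul_eq_zero.1 this).resolve_left hc.ne') with h | h
        · right; right; left; exact ⟨rfl, by linarith⟩
        · right; right; right; exact ⟨rfl, by linarith⟩
    · rintro (⟨rfl, rfl⟩ | ⟨rfl, rfl⟩ | ⟨rfl, rfl⟩ | ⟨rfl, rfl⟩)
      · refine ⟨by rw [abs_zero]; exact div_pos (by linarith) hq, by ring, ?_⟩
        refine (mul_eq_zero.1 (?_ : (2 * k - 2) * _ = 0)).resolve_left hq.ne'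
        generalize hs : _ / (2 * k - 2) = s
        rw [div_eq_iff hq.ne'] at hs
        linear_combination (s * (2 * k - 2) - (2 * k + m - 2) + r) * hs - hr2
      · refine ⟨by rw [abs_zero]; exact div_pos (by linarith) hq, by ring, ?_⟩
        refine (mul_eq_zero.1 (?_ : (2 * k - 2) * _ = 0)).resolve_left hq.ne'
        generalize hs : _ / (2 * k - 2) = s
        rw [div_eq_iff hq.ne'] at hs
        linear_combination (s * (2 * k - 2) - (2 * k + m - 2) - r) * hs - hr2
      · refine ⟨by rwa [abs_of_pos hD0], by linear_combination 2 * D * hwk, ?_⟩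
        linear_combination hD2 - 2 * w * hwk
      · refine ⟨by rwa [abs_neg, abs_of_pos hD0], by linear_combination -2 * D * hwk, ?_⟩
        linear_combination hD2 - 2 * w * hwk
  have hne : (2 * k + m - 2 + r) / (2 * k - 2) ≠ (2 * k + m - 2 - r) / (2 * k - 2) := by
    rw [Ne, div_left_inj' hq.ne']; linarith
  rw [key, Set.ncard_eq_toFinset_card']
  simp only [Set.toFinset_insert, Set.toFinset_singleton]
  rw [Finset.card_insert_of_notMem, Finset.card_insert_of_notMem, Finset.card_insert_of_notMem,
    Finset.card_singleton]
  · simp only [Finset.mem_singleton, Prod.mk.injEq, not_and]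
    intro _; linarith
  · simp only [Finset.mem_insert, Finset.mem_singleton, Prod.mk.injEq, not_or, not_and]
    exact ⟨fun _ => by linarith, fun _ => by linarith⟩
  · simp only [Finset.mem_insert, Finset.mem_singleton, Prod.mk.injEq, not_or, not_and]
    exact ⟨fun h => absurd h hne, fun _ => by linarith, fun _ => by linarith⟩

/-- The quartic obtained by substituting `s = (P - T) / K`, `d = -e / T` into the second conic of
`conicSet` and clearing denominators, where `K = k + l`, `e = k - l`, `P = 2 (k + l + m - 2)`. -/
def quartic (k l m T : ℝ) : ℝ :=
  (T ^ 2 - (k - l) ^ 2) * (k + l) *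
      (T * (2 * (k + l + m - 2) - T) - (k + l) * (k + l + 2 * m))
    + 2 * T ^ 2 * (2 * (k + l + m - 2) - T) ^ 2 - 2 * (k - l) ^ 2 * (k + l) ^ 2

lemma continuous_quartic (k l m : ℝ) : Continuous (quartic k l m) := by
  unfold quartic
  fun_prop

/-- `quartic` is a polynomial function of degree at most four whose leading coefficient
`2 - (k + l)` does not vanish, hence four distinct roots are all its roots. -/
lemma eq_of_quartic_eq_zero {k l m : ℝ} (hK : 2 < k + l) {r₁ r₂ r₃ r₄ : ℝ}
    (h12 : r₁ < r₂) (h23 : r₂ < r₃) (h34 : r₃ < r₄)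
    (h1 : quartic k l m r₁ = 0) (h2 : quartic k l m r₂ = 0) (h3 : quartic k l m r₃ = 0)
    (h4 : quartic k l m r₄ = 0) {T : ℝ} (hT : quartic k l m T = 0) :
    T = r₁ ∨ T = r₂ ∨ T = r₃ ∨ T = r₄ := by
  open Polynomial in
  set p : ℝ[X] := C (2 - (k + l)) * X ^ 4 + C (2 * (k + l + m - 2) * (k + l - 4)) * X ^ 3
    + C ((k + l) * (k - l) ^ 2 - (k + l) ^ 2 * (k + l + 2 * m)
      + 2 * (2 * (k + l + m - 2)) ^ 2) * X ^ 2
    + C (-(k - l) ^ 2 * (k + l) * (2 * (k + l + m - 2))) * X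
    + C ((k - l) ^ 2 * (k + l) ^ 2 * (k + l + 2 * m - 2)) with hp
  have heval : ∀ x, p.eval x = quartic k l m x := by
    intro x
    simp only [hp, quartic, Polynomial.eval_add, Polynomial.eval_mul, Polynomial.eval_C,
      Polynomial.eval_pow, Polynomial.eval_X]
    ring
  have hdeg : p.natDegree ≤ 4 := by
    rw [hp]; compute_degree
  have hp0 : p ≠ 0 := by
    intro h
    have hc : p.coeff 4 = 2 - (k + l) := by
      rw [hp]
      simp only [Polynomial.coeff_add, Polynomial.coeff_C_mul, Polynomial.coeff_X_pow,
        Polynomial.coeff_X, Polynomial.coeff_C]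
      norm_num
    rw [h, Polynomial.coeff_zero] at hc
    linarith
  have hmem : ∀ x, quartic k l m x = 0 → x ∈ p.roots.toFinset := by
    intro x hx
    rw [Multiset.mem_toFinset, Polynomial.mem_roots hp0, Polynomial.IsRoot.def, heval, hx]
  have hsub : ({r₁, r₂, r₃, r₄} : Finset ℝ) ⊆ p.roots.toFinset := by
    intro x hx
    simp only [Finset.mem_insert, Finset.mem_singleton] at hx
    rcases hx with rfl | rfl | rfl | rfl <;> exact hmem _ (by assumption)
  have hcard : ({r₁, r₂, r₃, r₄} : Finset ℝ).card = 4 := by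
    rw [Finset.card_insert_of_notMem, Finset.card_insert_of_notMem,
      Finset.card_insert_of_notMem, Finset.card_singleton] <;>
    simp only [Finset.mem_insert, Finset.mem_singleton, not_or] <;>
    grind
  have heq := Finset.eq_of_subset_of_card_le hsub (by
    rw [hcard]
    exact (Multiset.toFinset_card_le _).trans ((Polynomial.card_roots' p).trans hdeg))
  have := hmem T hT
  rw [← heq] at this
  simpa using this

/-- Off the degenerate case, `T = P - K s` identifies the solutions of the two conics with those
roots of the quartic that satisfy the positivity condition `|d| < s`. -/
lemma ncard_conicSet_eq_quartic {k l m : ℝ} (hl : 0 < l) (hkl : l < k) :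
    (conicSet k l m).ncard = {T : ℝ | T ≠ 0 ∧ quartic k l m T = 0 ∧
      |(k - l) / T| < (2 * (k + l + m - 2) - T) / (k + l)}.ncard := by
  set ψ : ℝ → ℝ × ℝ := fun T => ((2 * (k + l + m - 2) - T) / (k + l), -(k - l) / T) with hψ
  have hK : 0 < k + l := by linarith
  have hinj : Function.Injective ψ := by
    intro T T' h
    simp only [hψ, Prod.mk.injEq] at h
    have := (div_left_inj' hK.ne').1 h.1
    linarith
  rw [← Set.ncard_image_of_injective _ hinj]
  congr 1
  -- the factor relating the second conic to the quartic
  have hF : ∀ T, T ≠ 0 → ((k + l + 2 * m - 2) * (-(k - l) / T) ^ 2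
      + (k - l) * (-(k - l) / T) * ((2 * (k + l + m - 2) - T) / (k + l))
      - (k + l - 2) * ((2 * (k + l + m - 2) - T) / (k + l)) ^ 2
      + 2 * (k + l + m - 2) * ((2 * (k + l + m - 2) - T) / (k + l)) - (k + l + 2 * m))
      * (T ^ 2 * (k + l) ^ 2) = quartic k l m T := by
    intro T hT
    unfold quartic
    field_simp
    ring
  ext ⟨s, d⟩
  constructor
  · rintro ⟨hs, h1, h2⟩
    simp only at hs h1 h2
    have hT : 2 * (k + l + m - 2) - (k + l) * s ≠ 0 := by
      intro h0
      have : (k + l) * s - 2 * (k + l + m - 2) = 0 := by linarith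
      rw [this, mul_zero] at h1
      linarith
    have hse : s = (2 * (k + l + m - 2) - (2 * (k + l + m - 2) - (k + l) * s)) / (k + l) := by
      field_simp; ring
    have hde : d = -(k - l) / (2 * (k + l + m - 2) - (k + l) * s) := by
      rw [eq_div_iff hT]; linear_combination -h1
    refine ⟨2 * (k + l + m - 2) - (k + l) * s, ⟨hT, ?_, ?_⟩, ?_⟩
    · rw [← hF _ hT, ← hse, ← hde, h2, zero_mul]
    · rw [← hse, ← abs_neg, ← neg_div, ← hde]; exact hs
    · simp only [hψ]
      rw [← hse, ← hde]
  · rintro ⟨T, ⟨hT, h1, h2⟩, h⟩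
    simp only [hψ, Prod.mk.injEq] at h
    obtain ⟨rfl, rfl⟩ := h
    refine ⟨?_, ?_, ?_⟩
    · simp only
      rwa [neg_div, abs_neg]
    · simp only
      field_simp
      ring
    · simp only
      have h0 := hF T hT
      rw [h1] at h0
      exact (mul_eq_zero.1 h0).resolve_right (by positivity)

lemma quartic_neg_P {k l m : ℝ} (hm : 3 ≤ m) (hlm : m ≤ l) (hkl : l < k) :
    quartic k l m (-(2 * (k + l + m - 2))) < 0 := by
  set P := 2 * (k + l + m - 2) with hP
  have hPpos : 0 < P := by linarith
  have h1 : 4 * (k - l) ^ 2 ≤ P ^ 2 := by nlinarith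
  have h2 : 6 ≤ k + l := by linarith
  have h3 : 0 < (k + l) * (k + l + 2 * m) := by
    apply mul_pos <;> linarith
  have h4 : 3 / 4 * P ^ 2 * 6 ≤ (P ^ 2 - (k - l) ^ 2) * (k + l) :=
    mul_le_mul (by linarith) h2 (by norm_num) (by nlinarith)
  have h5 : 3 / 4 * P ^ 2 * 6 * (2 * P ^ 2) ≤
      (P ^ 2 - (k - l) ^ 2) * (k + l) * (2 * P ^ 2 + (k + l) * (k + l + 2 * m)) :=
    mul_le_mul h4 (by linarith) (by positivity) (le_trans (by positivity) h4)
  have h6 : 0 < P ^ 4 := by positivity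
  have h7 : 0 ≤ (k - l) ^ 2 * (k + l) ^ 2 := by positivity
  unfold quartic
  rw [← hP]
  nlinarith

lemma quartic_neg_e {k l m : ℝ} (hm : 3 ≤ m) (hlm : m ≤ l) (hkl : l < k) :
    0 < quartic k l m (-(k - l)) := by
  have : quartic k l m (-(k - l)) = 2 * (k - l) ^ 2 *
      ((2 * k + 2 * l + 2 * m - 4) * (2 * (k + l + m - 2) + (k - l) - (k + l))
        + (k - l) * (2 * (k + l + m - 2) + (k - l) - (k + l))) + 2 * (k - l) ^ 2 * (k + l) *
      (2 * (k + l + m - 2) + (k - l) - (k + l)) := by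
    unfold quartic; ring
  rw [this]
  have h1 : 0 < k - l := by linarith
  have h2 : 0 < 2 * (k + l + m - 2) + (k - l) - (k + l) := by linarith
  have h3 : 0 < 2 * k + 2 * l + 2 * m - 4 := by linarith
  have h4 : 0 < k + l := by linarith
  positivity

lemma quartic_e {k l m : ℝ} (hm : 3 ≤ m) (hlm : m ≤ l) (hkl : l < k) :
    0 < quartic k l m (k - l) := by
  have : quartic k l m (k - l) = 2 * (k - l) ^ 2 *
      ((2 * (k + l + m - 2) - (k - l) - (k + l)) * (2 * (k + l + m - 2) - (k - l) + (k + l))) := by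
    unfold quartic; ring
  rw [this]
  have h1 : 0 < k - l := by linarith
  have h2 : 0 < 2 * (k + l + m - 2) - (k - l) - (k + l) := by linarith
  have h3 : 0 < 2 * (k + l + m - 2) - (k - l) + (k + l) := by linarith
  positivity

/-- The hypothesis on `m` makes `4 k² (m - 2) (m² - 2 (k + l - 2))` positive, and subtracting it
from `-quartic k l m k` leaves a polynomial that has only nonnegative coefficients in the variables
`m - 4`, `l - m`, `k - l - 1`. -/
lemma quartic_k {k l m : ℝ} (hm : 4 ≤ m) (hlm : m ≤ l) (hkl : l + 1 ≤ k)
    (hsq : 2 * (k + l) - 4 < m ^ 2) : quartic k l m k < 0 := by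
  have hk : 0 < k := by linarith
  have h1 : 0 < 4 * k ^ 2 * (m - 2) * (m ^ 2 - 2 * (k + l) + 4) :=
    mul_pos (mul_pos (by positivity) (by linarith)) (by linarith)
  suffices h : 0 ≤ -quartic k l m k - 4 * k ^ 2 * (m - 2) * (m ^ 2 - 2 * (k + l) + 4) by linarith
  clear h1 hsq hk
  obtain ⟨z, hz, rfl⟩ : ∃ z, 0 ≤ z ∧ m = 4 + z := ⟨m - 4, by linarith, by ring⟩
  obtain ⟨c, hc, rfl⟩ : ∃ c, 0 ≤ c ∧ l = 4 + z + c := ⟨l - 4 - z, by linarith, by ring⟩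
  obtain ⟨d, hd, rfl⟩ : ∃ d, 0 ≤ d ∧ k = 5 + z + c + d := ⟨k - 5 - z - c, by linarith, by ring⟩
  unfold quartic
  ring_nf
  positivity

/-- Positivity at `T₀ = N (q - 2) / q`, where `N = k + l + m - 2` and `q = k + l - 2`.  This is the
point `s = 1 / (1 - 2 a₃)`, the vertex of the restriction of the second conic to `d = 0`. -/
lemma quartic_T₀ {k l m : ℝ} (hm : 3 ≤ m) (hlm : m ≤ l) (hkl : l < k)
    (hsq : 2 * (k + l) - 4 < m ^ 2) :
    0 < quartic k l m ((k + l + m - 2) * (k + l - 4) / (k + l - 2)) := by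
  have hq : 0 < k + l - 2 := by linarith
  have : quartic k l m ((k + l + m - 2) * (k + l - 4) / (k + l - 2)) =
      (k + l) ^ 2 / (k + l - 2) ^ 3 *
      ((m ^ 2 - 2 * (k + l - 2)) *
        (((k + l + m - 2) * (k + l - 4)) ^ 2 - ((k - l) * (k + l - 2)) ^ 2)
        + (k - l) ^ 2 * (k + l - 2) * (4 * (k + l - 2) * m + 2 * m ^ 2)) := by
    unfold quartic
    field_simp
    ring
  rw [this]
  have h1 : 0 < m ^ 2 - 2 * (k + l - 2) := by linarith
  have h2 : 0 ≤ (k - l) * (k + l - 2) := mul_nonneg (by linarith) hq.le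
  have h3 : (k - l) * (k + l - 2) < (k + l + m - 2) * (k + l - 4) := by
    nlinarith
  have h4 : 0 < ((k + l + m - 2) * (k + l - 4)) ^ 2 - ((k - l) * (k + l - 2)) ^ 2 :=
    sub_pos.2 (pow_lt_pow_left₀ h3 h2 two_ne_zero)
  have h5 : 0 < k + l := by linarith
  have h6 : 0 < k - l := by linarith
  have h7 : 0 < m := by linarith
  positivity

lemma quartic_P_sub_K {k l m : ℝ} (hm : 3 ≤ m) (hlm : m ≤ l) (hkl : l < k) :
    quartic k l m (k + l + 2 * m - 4) < 0 := by
  have : quartic k l m (k + l + 2 * m - 4) = -(2 * (k + l) ^ 2 *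
      ((2 * l + 2 * m - 4) * (2 * k + 2 * m - 4))) := by
    unfold quartic; ring
  rw [this]
  have h1 : 0 < 2 * l + 2 * m - 4 := by linarith
  have h2 : 0 < 2 * k + 2 * m - 4 := by linarith
  have h3 : 0 < k + l := by linarith
  have : 0 < 2 * (k + l) ^ 2 * ((2 * l + 2 * m - 4) * (2 * k + 2 * m - 4)) := by positivity
  linarith

lemma ncard_conicSet_of_lt {k l m : ℝ} (hm : 4 ≤ m) (hlm : m ≤ l) (hkl : l + 1 ≤ k)
    (hsq : 2 * (k + l) - 4 < m ^ 2) : (conicSet k l m).ncard = 4 := by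
  have hm3 : 3 ≤ m := by linarith
  have hkl' : l < k := by linarith
  have hK : 0 < k + l := by linarith
  have hq : 0 < k + l - 2 := by linarith
  rw [ncard_conicSet_eq_quartic (by linarith) hkl']
  set T₀ := (k + l + m - 2) * (k + l - 4) / (k + l - 2) with hT₀
  have hcont : ∀ s, ContinuousOn (quartic k l m) s := fun s => (continuous_quartic k l m).continuousOn
  have hkT : k < T₀ := by
    rw [hT₀, lt_div_iff₀ hq]; nlinarith
  have hTP : T₀ < k + l + 2 * m - 4 := by
    rw [hT₀, div_lt_iff₀ hq]; nlinarith
  obtain ⟨r₁, ⟨h1a, h1b⟩, h1⟩ := intermediate_value_Ioo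
    (a := -(2 * (k + l + m - 2))) (b := -(k - l)) (by linarith) (hcont _)
    ⟨quartic_neg_P hm3 hlm hkl', quartic_neg_e hm3 hlm hkl'⟩
  obtain ⟨r₂, ⟨h2a, h2b⟩, h2⟩ := intermediate_value_Ioo'
    (a := k - l) (b := k) (by linarith) (hcont _)
    ⟨quartic_k hm hlm hkl hsq, quartic_e hm3 hlm hkl'⟩
  obtain ⟨r₃, ⟨h3a, h3b⟩, h3⟩ := intermediate_value_Ioo hkT.le (hcont _)
    ⟨quartic_k hm hlm hkl hsq, quartic_T₀ hm3 hlm hkl' hsq⟩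
  obtain ⟨r₄, ⟨h4a, h4b⟩, h4⟩ := intermediate_value_Ioo' hTP.le (hcont _)
    ⟨quartic_P_sub_K hm3 hlm hkl', quartic_T₀ hm3 hlm hkl' hsq⟩
  -- On `(e, P - K)` positivity reads `e K < T (P - T)`; the right-hand side is concave in `T`.
  have hpos : ∀ T, k - l < T → T < k + l + 2 * m - 4 →
      |(k - l) / T| < (2 * (k + l + m - 2) - T) / (k + l) := by
    intro T ha hb
    have hT : 0 < T := by linarith
    rw [abs_of_pos (div_pos (by linarith) hT), div_lt_div_iff₀ hT hK]
    nlinarith [mul_pos (sub_pos.2 ha) (sub_pos.2 hb),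
      mul_pos (sub_pos.2 ha) (by linarith : 0 < 2 * l),
      mul_pos (sub_pos.2 hkl') (by linarith : 0 < 2 * l + 2 * m - 4)]
  have hpos₁ : |(k - l) / r₁| < (2 * (k + l + m - 2) - r₁) / (k + l) := by
    have hr : r₁ < 0 := by linarith
    have ha : |(k - l) / r₁| < 1 := by
      rw [abs_div, abs_of_neg hr, abs_of_pos (by linarith), div_lt_one (by linarith)]
      linarith
    refine ha.trans ?_
    rw [lt_div_iff₀ hK]
    linarith
  have h12 : r₁ < r₂ := by linarith
  have h23 : r₂ < r₃ := by linarith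
  have h34 : r₃ < r₄ := by linarith
  have key : {T : ℝ | T ≠ 0 ∧ quartic k l m T = 0 ∧
      |(k - l) / T| < (2 * (k + l + m - 2) - T) / (k + l)} = {r₁, r₂, r₃, r₄} := by
    ext T
    simp only [Set.mem_ofPred_eq, Set.mem_insert_iff, Set.mem_singleton_iff]
    constructor
    · rintro ⟨-, h, -⟩
      exact eq_of_quartic_eq_zero (by linarith) h12 h23 h34 h1 h2 h3 h4 h
    · rintro (rfl | rfl | rfl | rfl)
      · exact ⟨by linarith, h1, hpos₁⟩
      · exact ⟨by linarith, h2, hpos _ h2a (by linarith)⟩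
      · exact ⟨by linarith, h3, hpos _ (by linarith) (by linarith)⟩
      · exact ⟨by linarith, h4, hpos _ (by linarith) h4b⟩
  rw [key, Set.ncard_eq_toFinset_card']
  simp only [Set.toFinset_insert, Set.toFinset_singleton]
  rw [Finset.card_insert_of_notMem, Finset.card_insert_of_notMem,
    Finset.card_insert_of_notMem, Finset.card_singleton] <;>
  simp only [Finset.mem_insert, Finset.mem_singleton, not_or] <;>
  grind

theorem stmt0 (k l m : ℕ) (hkl : l ≤ k) (hlm : m ≤ l) (hm : 1 ≤ m) (hl : 2 ≤ l)
    (hsqrt : Real.sqrt (2 * (k : ℝ) + 2 * l - 4) < (m : ℝ)) :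
    (normalizedEinstein ((k : ℝ) / (2 * ((k : ℝ) + l + m - 2))) ((l : ℝ) / (2 * ((k : ℝ) + l + m - 2))) ((m : ℝ) / (2 * ((k : ℝ) + l + m - 2)))).ncard = 4 := by
  have hm0 : (0 : ℝ) < m := by exact_mod_cast hm
  have hsq : 2 * ((k : ℝ) + l) - 4 < (m : ℝ) ^ 2 := by
    have := (Real.sqrt_lt' hm0).1 hsqrt
    linarith
  have hsqN : 2 * (k + l) < m ^ 2 + 4 := by
    have : 2 * ((k : ℝ) + l) < (m : ℝ) ^ 2 + 4 := by linarith
    exact_mod_cast this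
  -- the hypothesis forces `(m - 2)² > 0`, and `m = 1` is excluded by `k + l ≥ 4`
  have hm3 : 3 ≤ m := by
    by_contra! h
    interval_cases m <;> omega
  have hklR : (l : ℝ) ≤ k := by exact_mod_cast hkl
  have hlmR : (m : ℝ) ≤ l := by exact_mod_cast hlm
  have hm3R : (3 : ℝ) ≤ m := by exact_mod_cast hm3
  rw [ncard_normalizedEinstein (by linarith) (by linarith) hm0 (by linarith)]
  rcases hkl.eq_or_lt with rfl | hlt
  · exact ncard_conicSet_of_eq hm3R hlmR hsq
  · have hm4 : 4 ≤ m := by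
      by_contra! h
      obtain rfl : m = 3 := by omega
      omega
    exact ncard_conicSet_of_lt (by exact_mod_cast hm4) hlmR (by exact_mod_cast hlt) hsq

end
end

section
/- For every q ∈ {2,3,4}, the set of integer triples (k,l,m) with k ≥ l ≥ m ≥ 1 and l ≥ 2 such that, for the parameters a₁ = k/(2(k+l+m−2)), a₂ = l/(2(k+l+m−2)), a₃ = m/(2(k+l+m−2)), the set of Einstein solutions normalized by x₁+x₂+x₃ = 1 has exactly q elements, is infinite. Equivalently, there are infinitely many spaces SO(k+l+m)/SO(k)×SO(l)×SO(m) admitting exactly q invariant Einstein metrics up to homothety, for each q ∈ {2,3,4}. -/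
/-!
All three families lie in the locus `k = l`, i.e. `a₁ = a₂ = a`, `a₃ = c`. There the difference of
the two Einstein equations factors as `(x₂ - x₁) (a + 2 c) (2 a (x₁ + x₂) - x₃)`, so solutions split
into two branches (`isEinstein_iff`), each governed by one quadratic form:

* `x₁ = x₂` with `(a + c) x₃² - x₁ x₃ + (1 - 2 c) x₁² = 0`;
* `x₃ = 2 a (x₁ + x₂)` with `(1 + 2 c) x₁ x₂ = (a + c) (1 - 4 a²) (x₁ + x₂)²`.

For `(k, l, m) = (n, n, 2)` with `n ≥ 3` the first form has negative discriminant while the second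
branch gives two solutions exchanged by `x₁ ↔ x₂`: two metrics. The discriminant of the first form
vanishes exactly when `m² = 4 (k - 1)`; the triples `(j² + 1, j² + 1, 2 j)` with `j ≥ 2` satisfy
this, and the second branch still gives two solutions: three metrics. Finally for `(n, n, n)` with
`n ≥ 3` both forms split over the rationals and the solutions are the Killing metric and the three
permutations of another one: four metrics.
-/

noncomputable section

/-- The two branches of Einstein solutions when the first two parameters agree. -/
lemma isEinstein_iff_s2 {a c x y z : ℝ} (ha : 0 < a) (hc : 0 < c) :
    isEinstein a a c x y z ↔ (0 < x ∧ 0 < y ∧ 0 < z) ∧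
      ((x = y ∧ (a + c) * z ^ 2 - x * z + (1 - 2 * c) * x ^ 2 = 0) ∨
       (z = 2 * a * (x + y) ∧
        (1 + 2 * c) * (x * y) = (a + c) * (1 - 4 * a ^ 2) * (x + y) ^ 2)) := by
  unfold isEinstein
  constructor
  · rintro ⟨hx, hy, hz, h1, h2⟩
    refine ⟨⟨hx, hy, hz⟩, ?_⟩
    have h : (a + 2 * c) * ((y - x) * (2 * a * (x + y) - z)) = 0 := by
      linear_combination h1 - h2
    have hac : a + 2 * c ≠ 0 := by positivity
    rcases mul_eq_zero.1 ((mul_eq_zero.1 h).resolve_left hac) with h | h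
    · obtain rfl : y = x := by linarith
      refine Or.inl ⟨rfl, mul_left_cancel₀ ha.ne' ?_⟩
      linear_combination h1
    · obtain rfl : z = 2 * a * (x + y) := by linarith
      refine Or.inr ⟨rfl, mul_left_cancel₀ ha.ne' ?_⟩
      linear_combination (h1 + h2) / 2
  · rintro ⟨⟨hx, hy, hz⟩, ⟨rfl, h⟩ | ⟨rfl, h⟩⟩
    · exact ⟨hx, hy, hz, by linear_combination a * h, by linear_combination a * h⟩
    · exact ⟨hx, hy, hz, by linear_combination a * h, by linear_combination a * h⟩

/-- The normalized solution on the branch `x₃ = 2 a (x₁ + x₂)` with `x₁ - x₂ = r (x₁ + x₂)`. -/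
def branchPoint (a r : ℝ) : ℝ × ℝ × ℝ :=
  ((1 + r) / (2 * (1 + 2 * a)), (1 - r) / (2 * (1 + 2 * a)), 2 * a / (1 + 2 * a))

/-- The branch `x₃ = 2 a (x₁ + x₂)` consists of two points, `D` being the normalized discriminant
of its quadratic form; the other branch is left as it is. -/
lemma mem_normalizedEinstein_iff {a c D : ℝ} (ha : 0 < a) (hc : 0 < c) (hD : 0 < D) (hD1 : D < 1)
    (h : (1 + 2 * c) * (1 - D) = 4 * (a + c) * (1 - 4 * a ^ 2)) (x : ℝ × ℝ × ℝ) :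
    x ∈ normalizedEinstein a a c ↔
      ((0 < x.1 ∧ 0 < x.2.2 ∧ x.1 = x.2.1 ∧ x.1 + x.2.1 + x.2.2 = 1 ∧
        (a + c) * x.2.2 ^ 2 - x.1 * x.2.2 + (1 - 2 * c) * x.1 ^ 2 = 0) ∨
      (x = branchPoint a (√D) ∨ x = branchPoint a (-√D))) := by
  obtain ⟨x, y, z⟩ := x
  simp only [normalizedEinstein, Set.mem_ofPred_eq, isEinstein_iff_s2 ha hc]
  have hr : √D ^ 2 = D := Real.sq_sqrt hD.le
  have hr0 : 0 < √D := Real.sqrt_pos.2 hD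
  have hr1 : √D < 1 := by nlinarith
  have h1a : 0 < 1 + 2 * a := by positivity
  have h1c : 0 < 1 + 2 * c := by positivity
  set r := √D
  have key : ∀ t : ℝ, t ^ 2 = D → -1 < t → t < 1 → (x, y, z) = branchPoint a t →
      (0 < x ∧ 0 < y ∧ 0 < z) ∧ (z = 2 * a * (x + y) ∧
        (1 + 2 * c) * (x * y) = (a + c) * (1 - 4 * a ^ 2) * (x + y) ^ 2) ∧ x + y + z = 1 := by
    intro t ht ht0 ht1 he
    simp only [branchPoint, Prod.mk.injEq] at he
    obtain ⟨rfl, rfl, rfl⟩ := he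
    refine ⟨⟨div_pos (by linarith) (by positivity), div_pos (by linarith) (by positivity),
      by positivity⟩, ⟨by field_simp; ring, ?_⟩, by field_simp; ring⟩
    field_simp
    linear_combination h - (1 + 2 * c) * ht
  constructor
  · rintro ⟨⟨⟨hx, hy, hz⟩, ⟨rfl, hq⟩ | ⟨hz', hq⟩⟩, hs⟩
    · exact Or.inl ⟨hx, hz, rfl, hs, hq⟩
    · right
      have hs' : (1 + 2 * a) * (x + y) = 1 := by linear_combination hs - hz'
      have hd : (1 + 2 * c) * ((x - y - r * (x + y)) * (x - y + r * (x + y))) = 0 := by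
        linear_combination (x + y) ^ 2 * h - 4 * hq - (1 + 2 * c) * (x + y) ^ 2 * hr
      simp only [branchPoint, Prod.mk.injEq]
      rcases mul_eq_zero.1 ((mul_eq_zero.1 hd).resolve_left h1c.ne') with hd | hd
      · left
        refine ⟨?_, ?_, ?_⟩ <;> rw [eq_div_iff (by positivity)]
        · linear_combination (1 + 2 * a) * hd + (1 + r) * hs'
        · linear_combination -(1 + 2 * a) * hd + (1 - r) * hs'
        · linear_combination (1 + 2 * a) * hz' + 2 * a * hs'
      · right
        refine ⟨?_, ?_, ?_⟩ <;> rw [eq_div_iff (by positivity)]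
        · linear_combination (1 + 2 * a) * hd + (1 - r) * hs'
        · linear_combination -(1 + 2 * a) * hd + (1 + r) * hs'
        · linear_combination (1 + 2 * a) * hz' + 2 * a * hs'
  · rintro (⟨hx, hz, rfl, hs, hq⟩ | he | he)
    · exact ⟨⟨⟨hx, hx, hz⟩, Or.inl ⟨rfl, hq⟩⟩, hs⟩
    · obtain ⟨h1, h2, h3⟩ := key r hr (by linarith) hr1 he
      exact ⟨⟨h1, Or.inr h2⟩, h3⟩
    · obtain ⟨h1, h2, h3⟩ := key (-r) (by rw [neg_sq, hr]) (by linarith) (by linarith) he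
      exact ⟨⟨h1, Or.inr h2⟩, h3⟩

lemma branchPoint_injective {a : ℝ} (ha : 0 < a) : Function.Injective (branchPoint a) := by
  intro r t h
  have h1 : (1 + r) / (2 * (1 + 2 * a)) = (1 + t) / (2 * (1 + 2 * a)) := congrArg Prod.fst h
  have h2 : (2 * (1 + 2 * a)) ≠ 0 := by positivity
  linarith [(div_left_inj' h2).1 h1]

lemma branchPoint_fst_eq {a r : ℝ} (ha : 0 < a)
    (h : (branchPoint a r).1 = (branchPoint a r).2.1) : r = 0 := by
  have h2 : (2 * (1 + 2 * a)) ≠ 0 := by positivity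
  linarith [(div_left_inj' h2).1 h]

/-- Two solutions when the quadratic form of the branch `x₁ = x₂` is definite. -/
lemma ncard_eq_two {a c D : ℝ} (ha : 0 < a) (hc : 0 < c) (hD : 0 < D) (hD1 : D < 1)
    (h : (1 + 2 * c) * (1 - D) = 4 * (a + c) * (1 - 4 * a ^ 2))
    (hneg : 1 < 4 * (a + c) * (1 - 2 * c)) :
    (normalizedEinstein a a c).ncard = 2 := by
  have hr0 : 0 < √D := Real.sqrt_pos.2 hD
  refine Set.ncard_eq_two.2 ⟨branchPoint a (√D), branchPoint a (-√D), ?_, ?_⟩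
  · intro he
    linarith [branchPoint_injective ha he]
  · ext x
    rw [mem_normalizedEinstein_iff ha hc hD hD1 h]
    simp only [Set.mem_insert_iff, Set.mem_singleton_iff]
    refine or_iff_right ?_
    rintro ⟨hx, -, -, -, hq⟩
    have hsq : (2 * (a + c) * x.2.2 - x.1) ^ 2 + (4 * (a + c) * (1 - 2 * c) - 1) * x.1 ^ 2 = 0 := by
      linear_combination 4 * (a + c) * hq
    have : 0 < (4 * (a + c) * (1 - 2 * c) - 1) * x.1 ^ 2 :=
      mul_pos (by linarith) (by positivity)
    nlinarith [sq_nonneg (2 * (a + c) * x.2.2 - x.1)]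

/-- Three solutions when the quadratic form of the branch `x₁ = x₂` is degenerate. -/
lemma ncard_eq_three {a c D : ℝ} (ha : 0 < a) (hc : 0 < c) (hD : 0 < D) (hD1 : D < 1)
    (h : (1 + 2 * c) * (1 - D) = 4 * (a + c) * (1 - 4 * a ^ 2))
    (hzero : 4 * (a + c) * (1 - 2 * c) = 1) :
    (normalizedEinstein a a c).ncard = 3 := by
  have hr0 : 0 < √D := Real.sqrt_pos.2 hD
  have hac : 0 < a + c := by positivity
  -- The double root is `x₃ = x₁ / (2 (a + c))`.
  let P : ℝ × ℝ × ℝ := (2 * (a + c) / (4 * (a + c) + 1), 2 * (a + c) / (4 * (a + c) + 1),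
    1 / (4 * (a + c) + 1))
  refine Set.ncard_eq_three.2 ⟨P, branchPoint a (√D), branchPoint a (-√D), ?_, ?_, ?_, ?_⟩
  · intro he
    have := branchPoint_fst_eq (r := √D) ha (by rw [← he])
    linarith
  · intro he
    have := branchPoint_fst_eq (r := -√D) ha (by rw [← he])
    linarith
  · intro he
    linarith [branchPoint_injective ha he]
  · ext x
    rw [mem_normalizedEinstein_iff ha hc hD hD1 h]
    simp only [Set.mem_insert_iff, Set.mem_singleton_iff]
    refine or_congr_left ?_
    obtain ⟨x, y, z⟩ := x
    simp only [P, Prod.mk.injEq]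
    constructor
    · rintro ⟨hx, hz, rfl, hs, hq⟩
      have hsq : (2 * (a + c) * z - x) ^ 2 = 0 := by
        linear_combination 4 * (a + c) * hq - x ^ 2 * hzero
      have hlin : 2 * (a + c) * z - x = 0 := pow_eq_zero_iff two_ne_zero |>.1 hsq
      refine ⟨?_, ?_, ?_⟩ <;> rw [eq_div_iff (by positivity)]
      · linear_combination 2 * (a + c) * hs - hlin
      · linear_combination 2 * (a + c) * hs - hlin
      · linear_combination hs + 2 * hlin
    · rintro ⟨rfl, rfl, rfl⟩
      refine ⟨by positivity, by positivity, rfl, by field_simp; ring, ?_⟩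
      field_simp
      linear_combination (a + c) * hzero

/-- Four solutions when the three parameters agree, outside the degenerate value `a = 1 / 4`. -/
lemma ncard_eq_four {a : ℝ} (ha : 0 < a) (ha2 : a < 1 / 2) (ha4 : a ≠ 1 / 4) :
    (normalizedEinstein a a a).ncard = 4 := by
  have h1a : 0 < 1 + 2 * a := by positivity
  obtain ⟨u, hu⟩ : ∃ u, u = 2 * a / (1 + 2 * a) := ⟨_, rfl⟩
  obtain ⟨w, hw⟩ : ∃ w, w = (1 - 2 * a) / (1 + 2 * a) := ⟨_, rfl⟩
  have hu0 : 0 < u := by rw [hu]; positivity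
  have hw0 : 0 < w := by rw [hw]; exact div_pos (by linarith) h1a
  have hu' : (1 + 2 * a) * u = 2 * a := by rw [hu]; field_simp
  have hw' : (1 + 2 * a) * w = 1 - 2 * a := by rw [hw]; field_simp
  have huw : w = 1 - 2 * u := by
    apply mul_left_cancel₀ h1a.ne'
    linear_combination hw' + 2 * hu'
  have hu3 : u ≠ 1 / 3 := by
    intro h
    apply ha4
    rw [h] at hu'
    linarith
  have hset : normalizedEinstein a a a =
      {(1 / 3, 1 / 3, 1 / 3), (u, u, w), (u, w, u), (w, u, u)} := by
    ext ⟨x, y, z⟩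
    simp only [normalizedEinstein, Set.mem_ofPred_eq, isEinstein_iff_s2 ha ha, Set.mem_insert_iff,
      Set.mem_singleton_iff, Prod.mk.injEq]
    constructor
    · rintro ⟨⟨-, ⟨rfl, hq⟩ | ⟨hz, hq⟩⟩, hs⟩
      · have hf : (z - x) * (2 * a * z - (1 - 2 * a) * x) = 0 := by linear_combination hq
        rcases mul_eq_zero.1 hf with hf | hf
        · left
          refine ⟨?_, ?_, ?_⟩ <;> linarith
        · right; left
          have hxu : x = u := by
            apply mul_left_cancel₀ h1a.ne'
            linear_combination 2 * a * hs - hf - hu'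
          refine ⟨hxu, hxu, ?_⟩
          linarith
      · right; right
        have hzu : z = u := by
          apply mul_left_cancel₀ h1a.ne'
          linear_combination hz - hu' + 2 * a * hs
        have hf : (1 + 2 * a) * ((x - z) * (y - z)) = 0 := by
          rw [hz]
          linear_combination hq
        rcases mul_eq_zero.1 ((mul_eq_zero.1 hf).resolve_left h1a.ne') with hf | hf
        · left
          refine ⟨?_, ?_, ?_⟩ <;> linarith
        · right
          refine ⟨?_, ?_, ?_⟩ <;> linarith
    · have hprod : (1 + 2 * a) * (w * u) = (a + a) * (1 - 4 * a ^ 2) * (w + u) ^ 2 := by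
        rw [hw, hu]
        field_simp
        ring
      rintro (⟨rfl, rfl, rfl⟩ | ⟨rfl, rfl, rfl⟩ | ⟨rfl, rfl, rfl⟩ | ⟨rfl, rfl, rfl⟩)
      · exact ⟨⟨by norm_num, Or.inl ⟨rfl, by ring⟩⟩, by norm_num⟩
      · refine ⟨⟨⟨hu0, hu0, hw0⟩, Or.inl ⟨rfl, ?_⟩⟩, by linarith⟩
        rw [hw, hu]
        field_simp
        ring
      · refine ⟨⟨⟨hu0, hw0, hu0⟩, Or.inr ⟨?_, ?_⟩⟩, by linarith⟩
        · rw [huw]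
          linear_combination hu'
        · linear_combination hprod
      · refine ⟨⟨⟨hw0, hu0, hu0⟩, Or.inr ⟨?_, ?_⟩⟩, by linarith⟩
        · rw [huw]
          linear_combination hu'
        · linear_combination hprod
  have hne : u ≠ w := by
    intro h
    apply hu3
    linarith
  rw [hset, Set.ncard_insert_of_notMem, Set.ncard_insert_of_notMem, Set.ncard_pair]
  · simp [hne]
  · simp [hne]
  · simp [Ne.symm hu3, -one_div]

theorem stmt2 (q : ℕ) (hq : q ∈ ({2, 3, 4} : Set ℕ)) :
    {t : ℕ × ℕ × ℕ | t.2.1 ≤ t.1 ∧ t.2.2 ≤ t.2.1 ∧ 1 ≤ t.2.2 ∧ 2 ≤ t.2.1 ∧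
      (normalizedEinstein ((t.1 : ℝ) / (2 * ((t.1 : ℝ) + t.2.1 + t.2.2 - 2)))
        ((t.2.1 : ℝ) / (2 * ((t.1 : ℝ) + t.2.1 + t.2.2 - 2)))
        ((t.2.2 : ℝ) / (2 * ((t.1 : ℝ) + t.2.1 + t.2.2 - 2)))).ncard = q}.Infinite := by
  have h234 : q = 2 ∨ q = 3 ∨ q = 4 := by simpa using hq
  rcases h234 with rfl | rfl | rfl
  · refine Set.infinite_of_injective_forall_mem (f := fun n : ℕ => (n + 3, n + 3, 2)) ?_ ?_
    · intro i j hij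
      simpa using hij
    · intro n
      refine ⟨le_rfl, by simp, by simp, by simp, ?_⟩
      have hn : (0 : ℝ) ≤ n := n.cast_nonneg
      have ha : ((n + 3 : ℕ) : ℝ) / (2 * (((n + 3 : ℕ) : ℝ) + ((n + 3 : ℕ) : ℝ) + ((2 : ℕ) : ℝ) - 2))
          = 1 / 4 := by
        push_cast
        rw [div_eq_div_iff (by linarith) (by norm_num)]
        ring
      have hc : ((2 : ℕ) : ℝ) / (2 * (((n + 3 : ℕ) : ℝ) + ((n + 3 : ℕ) : ℝ) + ((2 : ℕ) : ℝ) - 2))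
          = 1 / (2 * (n + 3)) := by
        push_cast
        rw [div_eq_div_iff (by linarith) (by positivity)]
        ring
      simp only [ha, hc]
      refine ncard_eq_two (D := (n + 1) / (4 * (n + 4))) (by norm_num) (by positivity)
        (by positivity) ?_ ?_ ?_
      · rw [div_lt_one (by positivity)]
        linarith
      · field_simp
        ring
      · have : 4 * (1 / 4 + 1 / (2 * ((n : ℝ) + 3))) * (1 - 2 * (1 / (2 * ((n : ℝ) + 3))))
            = 1 + (n + 1) / (n + 3) ^ 2 := by
          field_simp
          ring
        rw [this]
        have : 0 < ((n : ℝ) + 1) / (n + 3) ^ 2 := by positivity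
        linarith
  -- Here `k = l = j² + 1` and `m = 2 j` with `j = n + 2`.
  · refine Set.infinite_of_injective_forall_mem
      (f := fun n : ℕ => ((n + 2) ^ 2 + 1, (n + 2) ^ 2 + 1, 2 * (n + 2))) ?_ ?_
    · intro i j hij
      simp only [Prod.mk.injEq] at hij
      omega
    · intro n
      refine ⟨le_rfl, by dsimp only; nlinarith, by dsimp only; omega, ?_, ?_⟩
      · have : 0 < (n + 2) ^ 2 := by positivity
        dsimp only
        omega
      have hj : (2 : ℝ) ≤ ((n + 2 : ℕ) : ℝ) := by
        push_cast
        linarith [(n.cast_nonneg : (0 : ℝ) ≤ n)]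
      dsimp only
      generalize n + 2 = i at hj ⊢
      push_cast
      generalize (i : ℝ) = j at hj ⊢
      have hj0 : 0 < j := by linarith
      have ha : (j ^ 2 + 1) / (2 * (j ^ 2 + 1 + (j ^ 2 + 1) + 2 * j - 2))
          = (j ^ 2 + 1) / (4 * j * (j + 1)) := by
        congr 1
        ring
      have hc : 2 * j / (2 * (j ^ 2 + 1 + (j ^ 2 + 1) + 2 * j - 2)) = 1 / (2 * (j + 1)) := by
        rw [div_eq_div_iff (by nlinarith) (by positivity)]
        ring
      rw [ha, hc]
      refine ncard_eq_three (D := (j ^ 2 - 1) ^ 2 / (4 * j ^ 3 * (j + 2))) (by positivity)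
        (by positivity) ?_ ?_ ?_ ?_
      · have : 0 < j ^ 2 - 1 := by nlinarith
        positivity
      · rw [div_lt_one (by positivity)]
        have h4 : 0 < j ^ 4 := by positivity
        have h3 : 0 < j ^ 3 := by positivity
        nlinarith
      · field_simp
        ring
      · field_simp
        ring
  · refine Set.infinite_of_injective_forall_mem (f := fun n : ℕ => (n + 3, n + 3, n + 3)) ?_ ?_
    · intro i j hij
      simpa using hij
    · intro n
      refine ⟨le_rfl, le_rfl, by simp, by simp, ?_⟩
      have hn : (0 : ℝ) ≤ n := n.cast_nonneg
      dsimp only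
      push_cast
      have hpos : 0 < 2 * ((n : ℝ) + 3 + (n + 3) + (n + 3) - 2) := by linarith
      apply ncard_eq_four
      · positivity
      · rw [div_lt_div_iff₀ hpos (by norm_num)]
        linarith
      · rw [Ne, div_eq_div_iff hpos.ne' (by norm_num)]
        intro h
        linarith
end
end

section
/- Each of the following three sets of integer triples (k,l,m) with k ≥ l ≥ m ≥ 1 and l ≥ 2 is infinite: the set of triples for which (a₁,a₂,a₃) = (k/(2(k+l+m−2)), l/(2(k+l+m−2)), m/(2(k+l+m−2))) lies in Ω; the set of triples for which (a₁,a₂,a₃) lies in O₁; and the set of triples for which (a₁,a₂,a₃) lies in O₃. -/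
/-!
Three explicit one-parameter families of triples do the job.

* On `Ω`: the triples `(n² + 1, n² + 1, 2n)` satisfy `Q = 0` identically.
* In `O₁`: on the diagonal, `Q(t,t,t) = -(1 - 4t)⁸ (1 + 2t)⁴`, which vanishes for no
  `t ∈ (0, 1/4)`. The triples `(n,n,n)` with `n ≥ 4` have all three parameters equal to some
  `t ∈ (0, 1/4)`, so a segment of the diagonal joins their points to `(1/6,1/6,1/6)`.
* In `O₃`: the triples `(k,2,2)` give the points `(1/2 - e, e, e)` with `e = 1/(k + 2)`, and on
  this line `Q = 16 e³ (1 - e) (1 - 4e)⁴`, which is positive for `0 < e < 1/4`. Hence all of them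
  with `k ≥ 3` lie in the same component as `(1/3,1/6,1/6)`. That point is joined to
  `(1/6,1/4,1/3)` through the corner `(1/6,1/6,1/3)` by two segments on which `Q > 0`
  (`Qpoly_pos_edge` and `Qpoly_pos_swap`).
-/

noncomputable section

/-- The symmetric polynomial `Q` in the elementary symmetric functions of `a₁, a₂, a₃`. -/
def Qpoly (a₁ a₂ a₃ : ℝ) : ℝ :=
  let s₁ := a₁ + a₂ + a₃
  let s₂ := a₁ * a₂ + a₁ * a₃ + a₂ * a₃
  let s₃ := a₁ * a₂ * a₃
  (2 * s₁ + 4 * s₃ - 1) * (64 * s₁ ^ 5 - 64 * s₁ ^ 4 + 8 * s₁ ^ 3 + 12 * s₁ ^ 2 - 6 * s₁ + 1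
      + 240 * s₃ * s₁ ^ 2 - 240 * s₃ * s₁ - 1536 * s₃ ^ 2 * s₁ - 4096 * s₃ ^ 3 + 60 * s₃
      + 768 * s₃ ^ 2)
    - 8 * s₁ * (2 * s₁ + 4 * s₃ - 1) * (2 * s₁ - 32 * s₃ - 1) * (10 * s₁ + 32 * s₃ - 5) * s₂
    - 16 * s₁ ^ 2 * (13 - 52 * s₁ + 640 * s₃ * s₁ + 1024 * s₃ ^ 2 - 320 * s₃ + 52 * s₁ ^ 2)
      * s₂ ^ 2
    + 64 * (2 * s₁ - 1) * (2 * s₁ - 32 * s₃ - 1) * s₂ ^ 3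
    + 2048 * s₁ * (2 * s₁ - 1) * s₂ ^ 4

/-- The surface `Ω = {Q = 0}` in `ℝ³`. -/
def OmegaSet : Set (ℝ × ℝ × ℝ) := {p | Qpoly p.1 p.2.1 p.2.2 = 0}

/-- The open cube `(0, 1/2)³`. -/
def cube : Set (ℝ × ℝ × ℝ) :=
  {p | p.1 ∈ Set.Ioo (0 : ℝ) (1 / 2) ∧ p.2.1 ∈ Set.Ioo (0 : ℝ) (1 / 2) ∧
    p.2.2 ∈ Set.Ioo (0 : ℝ) (1 / 2)}

/-- `O₁`: the connected component of `(0,1/2)³ \ Ω` containing `(1/6, 1/6, 1/6)`. -/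
def O₁ : Set (ℝ × ℝ × ℝ) := connectedComponentIn (cube \ OmegaSet) (1 / 6, 1 / 6, 1 / 6)

/-- `O₃`: the connected component of `(0,1/2)³ \ Ω` containing `(1/6, 1/4, 1/3)`. -/
def O₃ : Set (ℝ × ℝ × ℝ) := connectedComponentIn (cube \ OmegaSet) (1 / 6, 1 / 4, 1 / 3)

/-- The point `(a₁, a₂, a₃)` associated to `SO(k+l+m)/SO(k)×SO(l)×SO(m)`. -/
def aPoint (k l m : ℕ) : ℝ × ℝ × ℝ :=
  ((k : ℝ) / (2 * ((k : ℝ) + l + m - 2)), (l : ℝ) / (2 * ((k : ℝ) + l + m - 2)),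
    (m : ℝ) / (2 * ((k : ℝ) + l + m - 2)))

/-- Membership in a component of `cube \ OmegaSet` propagates along a segment avoiding `Ω`. -/
lemma mem_component_of_segment {p x y : ℝ × ℝ × ℝ}
    (hx : x ∈ connectedComponentIn (cube \ OmegaSet) p)
    (h : segment ℝ x y ⊆ cube \ OmegaSet) :
    y ∈ connectedComponentIn (cube \ OmegaSet) p := by
  rw [connectedComponentIn_eq hx]
  exact (convex_segment x y).isPreconnected.subset_connectedComponentIn
    (left_mem_segment ℝ x y) h (right_mem_segment ℝ x y)

lemma mem_cube_diff {a b c : ℝ} (ha : 0 < a) (ha' : a < 1 / 2) (hb : 0 < b) (hb' : b < 1 / 2)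
    (hc : 0 < c) (hc' : c < 1 / 2) (hQ : Qpoly a b c ≠ 0) :
    (a, b, c) ∈ cube \ OmegaSet :=
  ⟨⟨⟨ha, ha'⟩, ⟨hb, hb'⟩, ⟨hc, hc'⟩⟩, hQ⟩

/-! ### Values of `Q` along special lines -/

lemma Qpoly_diag (t : ℝ) : Qpoly t t t = -((1 - 4 * t) ^ 8 * (1 + 2 * t) ^ 4) := by
  simp only [Qpoly]; ring

lemma Qpoly_line (e : ℝ) :
    Qpoly (1 / 2 - e) e e = 16 * e ^ 3 * (1 - e) * (1 - 4 * e) ^ 4 := by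
  simp only [Qpoly]; ring

/-- `Q > 0` on the segment from `(1/6,1/6,1/3)` to `(1/6,1/4,1/3)`. -/
lemma Qpoly_pos_edge {h : ℝ} (h0 : 0 ≤ h) (h1 : h ≤ 1 / 12) :
    0 < Qpoly (1 / 6) (1 / 6 + h) (1 / 3) := by
  have e : Qpoly (1 / 6) (1 / 6 + h) (1 / 3) =
      (5 + h * (50 - 37 * h - 3312 * h ^ 2)
        + (9144 * h ^ 4 + 178848 * h ^ 5 + 231984 * h ^ 6)) / 6561 := by
    simp only [Qpoly]; ring
  rw [e]
  have h2 : 0 ≤ 50 - 37 * h - 3312 * h ^ 2 := by nlinarith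
  have := mul_nonneg h0 h2
  positivity

/-- `Q > 0` on the segment from `(1/6,1/6,1/3)` to `(1/3,1/6,1/6)`. There `a + c = 1/2`, so `Q` is
a quartic polynomial in `v = ac - 1/18`, which is nonnegative; its constant, linear and quadratic
terms form a positive definite quadratic, and the other two coefficients are positive. -/
lemma Qpoly_pos_swap {a : ℝ} (h0 : 1 / 6 ≤ a) (h1 : a ≤ 1 / 3) :
    0 < Qpoly a (1 / 6) (1 / 2 - a) := by
  obtain ⟨v, hv⟩ : ∃ v, v = (a - 1 / 6) * (1 / 3 - a) := ⟨_, rfl⟩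
  have hv0 : 0 ≤ v := hv ▸ mul_nonneg (by linarith) (by linarith)
  have e : Qpoly a (1 / 6) (1 / 2 - a) =
      5 / 6561 - 412 / 2187 * v + 9068 / 729 * v ^ 2 + 7616 / 81 * v ^ 3 + 2048 / 9 * v ^ 4 := by
    subst hv; simp only [Qpoly]; ring
  have hq : 0 < 5 / 6561 - 412 / 2187 * v + 9068 / 729 * v ^ 2 := by
    -- the quadratic attains its minimum at `v = 103 / 13602`
    nlinarith [sq_nonneg (v - 103 / 13602)]
  rw [e]
  positivity

/-! ### The points of the three families -/

lemma aPoint_mem_Omega (n : ℕ) (hn : 1 ≤ n) :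
    aPoint (n ^ 2 + 1) (n ^ 2 + 1) (2 * n) ∈ OmegaSet := by
  have hn' : (1 : ℝ) ≤ n := by exact_mod_cast hn
  have h0 : (n : ℝ) ≠ 0 := by positivity
  have h1 : (n : ℝ) + 1 ≠ 0 := by positivity
  have hD : 2 * (((n : ℝ) ^ 2 + 1) + ((n : ℝ) ^ 2 + 1) + 2 * n - 2) = 4 * n * (n + 1) := by ring
  simp only [OmegaSet, aPoint, Set.mem_ofPred_eq, Nat.cast_add, Nat.cast_pow, Nat.cast_mul,
    Nat.cast_one, Nat.cast_ofNat, hD, Qpoly]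
  field_simp
  ring

lemma diag_mem_O₁ {t : ℝ} (h0 : 0 < t) (h1 : t < 1 / 4) : (t, t, t) ∈ O₁ := by
  have key : ∀ s : ℝ, 0 < s → s < 1 / 4 → (s, s, s) ∈ cube \ OmegaSet := by
    intro s hs hs'
    refine mem_cube_diff hs (by linarith) hs (by linarith) hs (by linarith) ?_
    rw [Qpoly_diag]
    have : 0 < 1 - 4 * s := by linarith
    have : 0 < (1 - 4 * s) ^ 8 * (1 + 2 * s) ^ 4 := by positivity
    linarith
  refine mem_component_of_segment
    (mem_connectedComponentIn (key (1 / 6) (by norm_num) (by norm_num))) ?_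
  rintro _ ⟨a, b, ha, hb, hab, rfl⟩
  obtain rfl : a = 1 - b := by linarith
  exact key _ (show 0 < (1 - b) * (1 / 6) + b * t by nlinarith)
    (show (1 - b) * (1 / 6) + b * t < 1 / 4 by nlinarith)

lemma edge_mem_O₃ : ((1 / 6, 1 / 6, 1 / 3) : ℝ × ℝ × ℝ) ∈ O₃ := by
  have key : ∀ h : ℝ, 0 ≤ h → h ≤ 1 / 12 →
      ((1 / 6, 1 / 6 + h, 1 / 3) : ℝ × ℝ × ℝ) ∈ cube \ OmegaSet := fun h h0 h1 =>
    mem_cube_diff (by norm_num) (by norm_num) (by linarith) (by linarith) (by norm_num)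
      (by norm_num) (Qpoly_pos_edge h0 h1).ne'
  have base : ((1 / 6, 1 / 4, 1 / 3) : ℝ × ℝ × ℝ) ∈ cube \ OmegaSet := by
    convert key (1 / 12) (by norm_num) le_rfl using 3
    norm_num
  refine mem_component_of_segment (mem_connectedComponentIn base) ?_
  rintro _ ⟨a, b, ha, hb, hab, rfl⟩
  obtain rfl : b = 1 - a := by linarith
  convert key (a * (1 / 12)) (by linarith) (by linarith) using 1
  ext <;> simp only [Prod.smul_mk, Prod.mk_add_mk, smul_eq_mul] <;> ring

lemma swap_mem_O₃ : ((1 / 3, 1 / 6, 1 / 6) : ℝ × ℝ × ℝ) ∈ O₃ := by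
  refine mem_component_of_segment edge_mem_O₃ ?_
  rintro _ ⟨a, b, ha, hb, hab, rfl⟩
  obtain rfl : a = 1 - b := by linarith
  have h0 : 1 / 6 ≤ 1 / 6 + b / 6 := by linarith
  have h1 : 1 / 6 + b / 6 ≤ 1 / 3 := by linarith
  convert mem_cube_diff (by linarith) (by linarith) (by norm_num) (by norm_num)
    (by linarith) (by linarith) (Qpoly_pos_swap h0 h1).ne' using 1
  ext <;> simp only [Prod.smul_mk, Prod.mk_add_mk, smul_eq_mul] <;> ring

lemma line_mem_O₃ {e : ℝ} (h0 : 0 < e) (h1 : e < 1 / 4) : (1 / 2 - e, e, e) ∈ O₃ := by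
  refine mem_component_of_segment swap_mem_O₃ ?_
  rintro _ ⟨a, b, ha, hb, hab, rfl⟩
  obtain rfl : a = 1 - b := by linarith
  have hs : 0 < (1 - b) * (1 / 6) + b * e := by nlinarith
  have hs' : (1 - b) * (1 / 6) + b * e < 1 / 4 := by nlinarith
  have hQ := Qpoly_line ((1 - b) * (1 / 6) + b * e)
  generalize hse : (1 - b) * (1 / 6) + b * e = s at hs hs' hQ
  have hpos : 0 < Qpoly (1 / 2 - s) s s := by
    have h2 : 0 < 1 - s := by linarith
    have h3 : 0 < 1 - 4 * s := by linarith
    rw [hQ]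
    positivity
  convert mem_cube_diff (by linarith) (by linarith) hs (by linarith) hs (by linarith)
    hpos.ne' using 1
  ext <;> simp only [Prod.smul_mk, Prod.mk_add_mk, smul_eq_mul] <;> linarith

theorem stmt3 :
    {t : ℕ × ℕ × ℕ | t.2.1 ≤ t.1 ∧ t.2.2 ≤ t.2.1 ∧ 1 ≤ t.2.2 ∧ 2 ≤ t.2.1 ∧
      aPoint t.1 t.2.1 t.2.2 ∈ OmegaSet}.Infinite ∧
    {t : ℕ × ℕ × ℕ | t.2.1 ≤ t.1 ∧ t.2.2 ≤ t.2.1 ∧ 1 ≤ t.2.2 ∧ 2 ≤ t.2.1 ∧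
      aPoint t.1 t.2.1 t.2.2 ∈ O₁}.Infinite ∧
    {t : ℕ × ℕ × ℕ | t.2.1 ≤ t.1 ∧ t.2.2 ≤ t.2.1 ∧ 1 ≤ t.2.2 ∧ 2 ≤ t.2.1 ∧
      aPoint t.1 t.2.1 t.2.2 ∈ O₃}.Infinite := by
  refine ⟨?_, ?_, ?_⟩
  · refine Set.infinite_of_injective_forall_mem
      (f := fun n : ℕ => ((n + 1) ^ 2 + 1, (n + 1) ^ 2 + 1, 2 * (n + 1))) ?_ ?_
    · intro m n h
      simp only [Prod.mk.injEq] at h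
      omega
    · intro n
      exact ⟨le_rfl, by dsimp only; nlinarith, by dsimp only; omega,
        Nat.succ_le_succ (Nat.one_le_pow _ _ n.succ_pos),
        aPoint_mem_Omega (n + 1) (by omega)⟩
  · -- `n / (2 (3n - 2)) < 1/4` holds exactly when `n > 2`
    refine Set.infinite_of_injective_forall_mem
      (f := fun n : ℕ => (n + 4, n + 4, n + 4)) ?_ ?_
    · intro m n h
      simp only [Prod.mk.injEq] at h
      omega
    · intro n
      refine ⟨le_rfl, le_rfl, by dsimp only; omega, by dsimp only; omega, ?_⟩
      have hn : (0 : ℝ) ≤ n := n.cast_nonneg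
      have hD : 0 < 2 * (((n : ℝ) + 4) + (n + 4) + (n + 4) - 2) := by linarith
      simp only [aPoint, Nat.cast_add, Nat.cast_ofNat]
      refine diag_mem_O₁ (by positivity) ?_
      rw [div_lt_iff₀ hD]
      linarith
  · refine Set.infinite_of_injective_forall_mem
      (f := fun n : ℕ => (n + 3, 2, 2)) ?_ ?_
    · intro m n h
      simp only [Prod.mk.injEq] at h
      omega
    · intro n
      refine ⟨by dsimp only; omega, le_rfl, by dsimp only; omega, le_rfl, ?_⟩
      have hn : (0 : ℝ) ≤ n := n.cast_nonneg
      have h5 : (n : ℝ) + 5 ≠ 0 := by positivity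
      have hD : 2 * (((n : ℝ) + 3) + 2 + 2 - 2) = 2 * (n + 5) := by ring
      have he : (1 : ℝ) / (n + 5) < 1 / 4 := by
        rw [div_lt_div_iff₀ (by positivity) (by norm_num)]
        linarith
      convert line_mem_O₃ (e := 1 / ((n : ℝ) + 5)) (by positivity) he using 1
      simp only [aPoint, Nat.cast_add, Nat.cast_ofNat, hD]
      ext <;> field_simp <;> ring
end
end

section
/- Let h ∈ (1/2,3/4) and let (a₁,a₂,a₃) ∈ (0,1/2)³ satisfy a₁+a₂+a₃ = h. If aᵢ > h − 2·x̂(h) for every i ∈ {1,2,3}, then (a₁,a₂,a₃) ∈ O₁. -/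
/-!
The hypotheses are made rational by the parameter `w = 2h - √(4h² + 4h - 3)`, which runs through
`(0, 1]` for `1/2 ≤ h < 3/4`: then `h = (3 + w²) / (4 (1 + w))` and `h - 2 x̂(h) = (1 - w) / 4`.
Hence the points of the plane `a₁ + a₂ + a₃ = h` with all `aᵢ > h - 2 x̂(h)` are exactly
`aᵢ = (1 - w² + 4 w² vᵢ) / (4 (1 + w))` with `vᵢ > 0` and `v₁ + v₂ + v₃ = 1`.

In these coordinates `Q` is `-w⁸` times a positive factor times a polynomial in `t = w²` and the
elementary symmetric functions `p, r` of the `vᵢ`. The possible values of `(p, r)` lie in the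
triangle with vertices `(0, 0)`, `(1/4, 0)`, `(1/3, 1/27)`, because `r > 0`, `p ≥ 9r` and (Schur)
`1 - 4p + 9r ≥ 0`. Written in the barycentric coordinates of that triangle and in `t`, `1 - t`,
the polynomial has only nonnegative coefficients (`cert`), so `Q < 0` on the whole open triangle
(`Qpoly_neg`).

Consequently `Q` has no zero on the segment from `(a₁, a₂, a₃)` to `(h/3, h/3, h/3)`, nor on the
diagonal segment from there to `(1/6, 1/6, 1/6)`, and both segments stay in the cube.
-/

noncomputable section

/-- `x̂(h) = (6h - 1 - √(4h² + 4h - 3))/8`. -/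
noncomputable def xhat (h : ℝ) : ℝ := (6 * h - 1 - Real.sqrt (4 * h ^ 2 + 4 * h - 3)) / 8

/-- The polynomial `-Q / (2²⁰ w⁸)`, after clearing denominators, in the barycentric-type coordinates
`α = 1 - 4p + 9r`, `b = p - 9r`, `c = r` and in `t = w²`, `u = 1 - t`. -/
def cert (α b c t u : ℝ) : ℝ :=
    α ^ 4 * u ^ 6 * (9 * u ^ 2 + 32 * t * u + 32 * t ^ 2)
      + α ^ 3 * b * u ^ 5 * (216 * u ^ 3 + 960 * t * u ^ 2 + 1488 * t ^ 2 * u + 768 * t ^ 3)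
      + α ^ 3 * c * u ^ 4 * (4212 * u ^ 4 + 23904 * t * u ^ 3 + 52192 * t ^ 2 * u ^ 2
          + 50688 * t ^ 3 * u + 18176 * t ^ 4)
      + α ^ 2 * b ^ 2 * u ^ 4 * (1296 * u ^ 4 + 6144 * t * u ^ 3 + 10944 * t ^ 2 * u ^ 2
          + 8448 * t ^ 3 * u + 2368 * t ^ 4)
      + α ^ 2 * b * c * u ^ 3 * (48600 * u ^ 5 + 285120 * t * u ^ 4 + 674832 * t ^ 2 * u ^ 3
          + 794880 * t ^ 3 * u ^ 2 + 463104 * t ^ 4 * u + 106496 * t ^ 5)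
      + α ^ 2 * c ^ 2 * u ^ 2 * (266814 * u ^ 6 + 1640736 * t * u ^ 5
          + 4116960 * t ^ 2 * u ^ 4 + 5253120 * t ^ 3 * u ^ 3 + 3452160 * t ^ 4 * u ^ 2
          + 1007616 * t ^ 5 * u + 65536 * t ^ 6)
      + α * b ^ 3 * u ^ 3 * (2304 * u ^ 5 + 11264 * t * u ^ 4 + 22016 * t ^ 2 * u ^ 3
          + 21504 * t ^ 3 * u ^ 2 + 10496 * t ^ 4 * u + 2048 * t ^ 5)
      + α * b ^ 2 * c * u ^ 2 * (163296 * u ^ 6 + 1009152 * t * u ^ 5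
          + 2623872 * t ^ 2 * u ^ 4 + 3654144 * t ^ 3 * u ^ 3 + 2861184 * t ^ 4 * u ^ 2
          + 1189888 * t ^ 5 * u + 204800 * t ^ 6)
      + α * b * c ^ 2 * u * (1872072 * u ^ 7 + 12052800 * t * u ^ 6
          + 32861808 * t ^ 2 * u ^ 5 + 48515328 * t ^ 3 * u ^ 4 + 41079552 * t ^ 4 * u ^ 3
          + 19292160 * t ^ 5 * u ^ 2 + 4308992 * t ^ 6 * u + 262144 * t ^ 7)
      + α * c ^ 3 * u * (5904900 * u ^ 7 + 38841120 * t * u ^ 6 + 109011744 * t ^ 2 * u ^ 5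
          + 167588352 * t ^ 3 * u ^ 4 + 150626304 * t ^ 4 * u ^ 3 + 77856768 * t ^ 5 * u ^ 2
          + 20840448 * t ^ 6 * u + 2097152 * t ^ 7)
      + b ^ 3 * c * u * (145152 * u ^ 7 + 1004544 * t * u ^ 6 + 2976256 * t ^ 2 * u ^ 5
          + 4893696 * t ^ 3 * u ^ 4 + 4822784 * t ^ 4 * u ^ 3 + 2848768 * t ^ 5 * u ^ 2
          + 933888 * t ^ 6 * u + 131072 * t ^ 7)
      + b ^ 2 * c ^ 2 * (2904336 * u ^ 8 + 20279808 * t * u ^ 7 + 61096896 * t ^ 2 * u ^ 6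
          + 103230720 * t ^ 3 * u ^ 5 + 106144320 * t ^ 4 * u ^ 4 + 67074048 * t ^ 5 * u ^ 3
          + 24764416 * t ^ 6 * u ^ 2 + 4587520 * t ^ 7 * u + 262144 * t ^ 8)
      + b * c ^ 3 * (19368072 * u ^ 8 + 136468800 * t * u ^ 7 + 417886128 * t ^ 2 * u ^ 6
          + 724660992 * t ^ 3 * u ^ 5 + 775443456 * t ^ 4 * u ^ 4
          + 521109504 * t ^ 5 * u ^ 3 + 212533248 * t ^ 6 * u ^ 2 + 47185920 * t ^ 7 * u
          + 4194304 * t ^ 8)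
      + c ^ 4 * (9 * u + 8 * t) ^ 8

lemma cert_pos {α b c t u : ℝ} (hα : 0 ≤ α) (hb : 0 ≤ b) (hc : 0 < c) (ht : 0 < t) (hu : 0 ≤ u) :
    0 < cert α b c t u := by
  unfold cert
  -- Only the last summand need be positive; the others may vanish, for instance when `u = 0`.
  refine add_pos_of_nonneg_of_pos ?_ ?_ <;> positivity

/-- `Q` as a function of the elementary symmetric functions. -/
def Qs (s₁ s₂ s₃ : ℝ) : ℝ :=
  (2 * s₁ + 4 * s₃ - 1) * (64 * s₁ ^ 5 - 64 * s₁ ^ 4 + 8 * s₁ ^ 3 + 12 * s₁ ^ 2 - 6 * s₁ + 1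
      + 240 * s₃ * s₁ ^ 2 - 240 * s₃ * s₁ - 1536 * s₃ ^ 2 * s₁ - 4096 * s₃ ^ 3 + 60 * s₃
      + 768 * s₃ ^ 2)
    - 8 * s₁ * (2 * s₁ + 4 * s₃ - 1) * (2 * s₁ - 32 * s₃ - 1) * (10 * s₁ + 32 * s₃ - 5) * s₂
    - 16 * s₁ ^ 2 * (13 - 52 * s₁ + 640 * s₃ * s₁ + 1024 * s₃ ^ 2 - 320 * s₃ + 52 * s₁ ^ 2)
      * s₂ ^ 2
    + 64 * (2 * s₁ - 1) * (2 * s₁ - 32 * s₃ - 1) * s₂ ^ 3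
    + 2048 * s₁ * (2 * s₁ - 1) * s₂ ^ 4

/-- The homogenization of `Qs`, of weighted degree 12 when `s₁, s₂, s₃, e` have weights
`1, 2, 3, 1`. -/
def Qhom (s₁ s₂ s₃ e : ℝ) : ℝ :=
  (2 * s₁ * e ^ 2 + 4 * s₃ - e ^ 3) * (64 * s₁ ^ 5 * e ^ 4 - 64 * s₁ ^ 4 * e ^ 5
      + 8 * s₁ ^ 3 * e ^ 6 + 12 * s₁ ^ 2 * e ^ 7 - 6 * s₁ * e ^ 8 + e ^ 9
      + 240 * s₃ * s₁ ^ 2 * e ^ 4 - 240 * s₃ * s₁ * e ^ 5 - 1536 * s₃ ^ 2 * s₁ * e ^ 2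
      - 4096 * s₃ ^ 3 + 60 * s₃ * e ^ 6 + 768 * s₃ ^ 2 * e ^ 3)
    - 8 * s₁ * (2 * s₁ * e ^ 2 + 4 * s₃ - e ^ 3) * (2 * s₁ * e ^ 2 - 32 * s₃ - e ^ 3)
      * (10 * s₁ * e ^ 2 + 32 * s₃ - 5 * e ^ 3) * s₂
    - 16 * s₁ ^ 2 * (13 * e ^ 6 - 52 * s₁ * e ^ 5 + 640 * s₃ * s₁ * e ^ 2 + 1024 * s₃ ^ 2
      - 320 * s₃ * e ^ 3 + 52 * s₁ ^ 2 * e ^ 4) * s₂ ^ 2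
    + 64 * (2 * s₁ - e) * (2 * s₁ * e ^ 2 - 32 * s₃ - e ^ 3) * s₂ ^ 3 * e ^ 2
    + 2048 * s₁ * (2 * s₁ - e) * s₂ ^ 4 * e ^ 2

lemma Qhom_smul (s₁ s₂ s₃ e : ℝ) :
    Qhom (e * s₁) (e ^ 2 * s₂) (e ^ 3 * s₃) e = e ^ 12 * Qs s₁ s₂ s₃ := by
  unfold Qhom Qs; ring

/-- The identity behind the sign of `Q`: on the left, `Qhom` at the elementary symmetric
functions of the numbers `1 - w² + 4 w² vᵢ`, where those of the `vᵢ` are `1, p, r`. -/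
lemma Qhom_eq (w p r : ℝ) :
    Qhom (3 + w ^ 2)
      (3 * (1 - w ^ 2) ^ 2 + 8 * w ^ 2 * (1 - w ^ 2) + 16 * w ^ 4 * p)
      ((1 - w ^ 2) ^ 3 + 4 * w ^ 2 * (1 - w ^ 2) ^ 2 + 16 * w ^ 4 * (1 - w ^ 2) * p
        + 64 * w ^ 6 * r) (4 * (1 + w))
      = -(2 ^ 20 * w ^ 8 * cert (1 - 4 * p + 9 * r) (p - 9 * r) r (w ^ 2) (1 - w ^ 2)) := by
  unfold Qhom cert; ring

/-- Schur's inequality of degree one. -/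
lemma schur_one {x y z : ℝ} (hx : 0 < x) (hy : 0 < y) (hz : 0 < z) :
    0 ≤ (x + y + z) ^ 3 - 4 * (x + y + z) * (x * y + x * z + y * z) + 9 * (x * y * z) := by
  -- The left side is `(x - y)² (x + y - z) + z (x - z) (y - z)`, a sum of nonnegative terms when
  -- `z` is the smallest variable; the other orderings follow by symmetry.
  rcases le_total x y with h₁ | h₁ <;> rcases le_total y z with h₂ | h₂ <;>
    rcases le_total x z with h₃ | h₃ <;>
    nlinarith [mul_nonneg (sub_nonneg.2 h₁) (sub_nonneg.2 h₂),
      mul_nonneg (sub_nonneg.2 h₁) (sub_nonneg.2 h₃),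
      mul_nonneg (sub_nonneg.2 h₂) (sub_nonneg.2 h₃),
      mul_nonneg hx.le (mul_nonneg (sub_nonneg.2 h₁) (sub_nonneg.2 h₃)),
      mul_nonneg hy.le (mul_nonneg (sub_nonneg.2 h₁) (sub_nonneg.2 h₂)),
      mul_nonneg hz.le (mul_nonneg (sub_nonneg.2 h₂) (sub_nonneg.2 h₃)),
      mul_nonneg (sub_nonneg.2 h₁) (sq_nonneg (x - y)),
      mul_nonneg (sub_nonneg.2 h₂) (sq_nonneg (y - z)),
      mul_nonneg (sub_nonneg.2 h₃) (sq_nonneg (x - z)),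
      mul_nonneg hx.le (sq_nonneg (y - z)), mul_nonneg hy.le (sq_nonneg (x - z)),
      mul_nonneg hz.le (sq_nonneg (x - y))]

/-- Negativity of `Q` in the rational parametrization. -/
lemma Qpoly_neg_param {w x y z : ℝ} (hw : 0 < w) (hw1 : w ≤ 1) (hx : 0 < x) (hy : 0 < y)
    (hz : 0 < z) (hv : x + y + z = 1) {a₁ a₂ a₃ : ℝ}
    (ha₁ : 4 * (1 + w) * a₁ = 1 - w ^ 2 + 4 * w ^ 2 * x)
    (ha₂ : 4 * (1 + w) * a₂ = 1 - w ^ 2 + 4 * w ^ 2 * y)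
    (ha₃ : 4 * (1 + w) * a₃ = 1 - w ^ 2 + 4 * w ^ 2 * z) : Qpoly a₁ a₂ a₃ < 0 := by
  have hz' : z = 1 - x - y := by linarith
  have key := Qhom_smul (a₁ + a₂ + a₃) (a₁ * a₂ + a₁ * a₃ + a₂ * a₃) (a₁ * a₂ * a₃) (4 * (1 + w))
  have e₁ : 4 * (1 + w) * (a₁ + a₂ + a₃) = 3 + w ^ 2 := by
    linear_combination ha₁ + ha₂ + ha₃ + 4 * w ^ 2 * hv
  have e₂ : (4 * (1 + w)) ^ 2 * (a₁ * a₂ + a₁ * a₃ + a₂ * a₃)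
      = 3 * (1 - w ^ 2) ^ 2 + 8 * w ^ 2 * (1 - w ^ 2) + 16 * w ^ 4 * (x * y + x * z + y * z) := by
    calc _ = (4 * (1 + w) * a₁) * (4 * (1 + w) * a₂) + (4 * (1 + w) * a₁) * (4 * (1 + w) * a₃)
          + (4 * (1 + w) * a₂) * (4 * (1 + w) * a₃) := by ring
      _ = _ := by rw [ha₁, ha₂, ha₃, hz']; ring
  have e₃ : (4 * (1 + w)) ^ 3 * (a₁ * a₂ * a₃)
      = (1 - w ^ 2) ^ 3 + 4 * w ^ 2 * (1 - w ^ 2) ^ 2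
        + 16 * w ^ 4 * (1 - w ^ 2) * (x * y + x * z + y * z) + 64 * w ^ 6 * (x * y * z) := by
    calc _ = (4 * (1 + w) * a₁) * (4 * (1 + w) * a₂) * (4 * (1 + w) * a₃) := by ring
      _ = _ := by rw [ha₁, ha₂, ha₃, hz']; ring
  rw [e₁, e₂, e₃, Qhom_eq] at key
  have hα : 0 ≤ 1 - 4 * (x * y + x * z + y * z) + 9 * (x * y * z) := by
    have := schur_one hx hy hz
    rw [hv] at this
    linarith
  have hb : 0 ≤ x * y + x * z + y * z - 9 * (x * y * z) := by
    have : 0 ≤ (x + y + z) * (x * y + x * z + y * z) - 9 * (x * y * z) := by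
      nlinarith [mul_nonneg hx.le (sq_nonneg (y - z)), mul_nonneg hy.le (sq_nonneg (x - z)),
        mul_nonneg hz.le (sq_nonneg (x - y))]
    rw [hv] at this
    linarith
  have hpos := cert_pos hα hb (by positivity : 0 < x * y * z) (by positivity : 0 < w ^ 2)
    (by nlinarith : 0 ≤ 1 - w ^ 2)
  have hneg : (4 * (1 + w)) ^ 12 * Qs (a₁ + a₂ + a₃) (a₁ * a₂ + a₁ * a₃ + a₂ * a₃) (a₁ * a₂ * a₃)
      < 0 := by
    rw [← key]
    exact neg_neg_of_pos (by positivity)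
  exact neg_of_mul_neg_right hneg (by positivity)

/-- `Q < 0` on the open triangle cut out of the plane `a₁ + a₂ + a₃ = h` by the inequalities
`aᵢ > h - 2 x̂(h)`. -/
lemma Qpoly_neg {h a₁ a₂ a₃ : ℝ} (hh : 1 / 2 ≤ h) (hh' : h < 3 / 4) (hsum : a₁ + a₂ + a₃ = h)
    (h1 : h - 2 * xhat h < a₁) (h2 : h - 2 * xhat h < a₂) (h3 : h - 2 * xhat h < a₃) :
    Qpoly a₁ a₂ a₃ < 0 := by
  have hR : 0 ≤ 4 * h ^ 2 + 4 * h - 3 := by nlinarith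
  have hsq := Real.sq_sqrt hR
  have hs0 := Real.sqrt_nonneg (4 * h ^ 2 + 4 * h - 3)
  unfold xhat at h1 h2 h3
  generalize Real.sqrt (4 * h ^ 2 + 4 * h - 3) = s at *
  obtain ⟨w, hwdef⟩ : ∃ w, w = 2 * h - s := ⟨_, rfl⟩
  obtain rfl : s = 2 * h - w := by linarith
  have hw : 0 < w := by nlinarith
  have hw1 : w ≤ 1 := by nlinarith
  have hrel : 4 * (1 + w) * h = 3 + w ^ 2 := by linarith
  have hm : ∀ a : ℝ, h - 2 * ((6 * h - 1 - (2 * h - w)) / 8) < a →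
      0 < (4 * (1 + w) * a - (1 - w ^ 2)) / (4 * w ^ 2) := fun a ha => by
    have : 0 < 4 * (1 + w) * a - (1 - w ^ 2) := by nlinarith
    positivity
  refine Qpoly_neg_param hw hw1 (hm a₁ h1) (hm a₂ h2) (hm a₃ h3) ?_ ?_ ?_ ?_
  · field_simp
    linear_combination 4 * (1 + w) * hsum + hrel
  all_goals field_simp; ring

/-- The centre of the plane section satisfies the inequalities of the triangle strictly. -/
lemma centre_mem {h : ℝ} (hh : 1 / 2 ≤ h) (hh' : h < 3 / 4) : h - 2 * xhat h < h / 3 := by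
  have hs : Real.sqrt (4 * h ^ 2 + 4 * h - 3) < 10 / 3 * h - 1 := by
    rw [Real.sqrt_lt' (by linarith)]
    -- The difference of the squares is `(4/9) (4h - 3)²`.
    nlinarith [mul_pos (sub_pos.2 hh') (sub_pos.2 hh')]
  unfold xhat
  linarith

theorem stmt6 (h a₁ a₂ a₃ : ℝ) (hh : h ∈ Set.Ioo (1 / 2 : ℝ) (3 / 4))
    (ha : (a₁, a₂, a₃) ∈ cube) (hsum : a₁ + a₂ + a₃ = h)
    (h1 : h - 2 * xhat h < a₁) (h2 : h - 2 * xhat h < a₂) (h3 : h - 2 * xhat h < a₃) :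
    (a₁, a₂, a₃) ∈ O₁ := by
  obtain ⟨hl, hu⟩ := hh
  obtain ⟨⟨p1, q1⟩, ⟨p2, q2⟩, ⟨p3, q3⟩⟩ := ha
  dsimp only at p1 q1 p2 q2 p3 q3
  have hc := centre_mem hl.le hu
  set f : ℝ → ℝ × ℝ × ℝ := fun s =>
    ((1 - s) * a₁ + s * (h / 3), (1 - s) * a₂ + s * (h / 3), (1 - s) * a₃ + s * (h / 3)) with hf
  set g : ℝ → ℝ × ℝ × ℝ := fun s => (s, s, s) with hg
  have hfc : Continuous f := by fun_prop
  have hgc : Continuous g := by fun_prop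
  have hA : IsPreconnected (f '' Set.Icc 0 1) := isPreconnected_Icc.image f hfc.continuousOn
  have hB : IsPreconnected (g '' Set.Icc (1 / 6) (h / 3)) :=
    isPreconnected_Icc.image g hgc.continuousOn
  have hcA : (h / 3, h / 3, h / 3) ∈ f '' Set.Icc 0 1 := ⟨1, by norm_num, by simp [hf]⟩
  have hcB : (h / 3, h / 3, h / 3) ∈ g '' Set.Icc (1 / 6) (h / 3) :=
    ⟨h / 3, ⟨by linarith, le_rfl⟩, rfl⟩
  have hAB := IsPreconnected.union _ hcA hcB hA hB
  -- A convex combination of two numbers in an open half-line is again in it.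
  have conv : ∀ {s m x y : ℝ}, 0 ≤ s → s ≤ 1 → m < x → m < y → m < (1 - s) * x + s * y :=
    fun {s m x y} h0 h1 hx hy => convex_Ioi (𝕜 := ℝ) m hx hy (sub_nonneg.2 h1) h0 (by ring)
  have conv' : ∀ {s m x y : ℝ}, 0 ≤ s → s ≤ 1 → x < m → y < m → (1 - s) * x + s * y < m :=
    fun {s m x y} h0 h1 hx hy => convex_Iio (𝕜 := ℝ) m hx hy (sub_nonneg.2 h1) h0 (by ring)
  have hc0 : 0 < h / 3 := by linarith
  have hc1 : h / 3 < 1 / 2 := by linarith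
  have hmem₁ : ((1 / 6, 1 / 6, 1 / 6) : ℝ × ℝ × ℝ) ∈
      f '' Set.Icc 0 1 ∪ g '' Set.Icc (1 / 6) (h / 3) :=
    Or.inr ⟨1 / 6, ⟨le_rfl, by linarith⟩, rfl⟩
  have hmem₀ : (a₁, a₂, a₃) ∈ f '' Set.Icc 0 1 ∪ g '' Set.Icc (1 / 6) (h / 3) :=
    Or.inl ⟨0, by norm_num, by simp [hf]⟩
  change _ ∈ connectedComponentIn _ _
  refine hAB.subset_connectedComponentIn hmem₁ ?_ hmem₀
  rintro _ (⟨s, ⟨h0, h1'⟩, rfl⟩ | ⟨s, ⟨h0, h1'⟩, rfl⟩)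
  · refine ⟨⟨⟨conv h0 h1' p1 hc0, conv' h0 h1' q1 hc1⟩, ⟨conv h0 h1' p2 hc0, conv' h0 h1' q2 hc1⟩,
      ⟨conv h0 h1' p3 hc0, conv' h0 h1' q3 hc1⟩⟩, ?_⟩
    refine (Qpoly_neg hl.le hu ?_ (conv h0 h1' h1 hc) (conv h0 h1' h2 hc)
      (conv h0 h1' h3 hc)).ne
    linear_combination (1 - s) * hsum
  · have m : s ∈ Set.Ioo (0 : ℝ) (1 / 2) := ⟨by linarith, by linarith⟩
    refine ⟨⟨m, m, m⟩, ?_⟩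
    -- On the diagonal, `(s, s, s)` is the centre of the triangle for the parameter `3s`.
    have hs : 3 * s - 2 * xhat (3 * s) < s := by
      have := centre_mem (h := 3 * s) (by linarith) (by linarith)
      linarith
    exact (Qpoly_neg (h := 3 * s) (by linarith) (by linarith) (by ring) hs hs hs).ne
end
end

section
/- Let h ∈ (1/2,3/4) and let (a₁,a₂,a₃) ∈ (0,1/2)³ satisfy a₁+a₂+a₃ = h. If aᵢ < x̃(h) for some i ∈ {1,2,3}, then (a₁,a₂,a₃) ∈ O₃. -/
/-!
Write `h = a₁ + a₂ + a₃` and `f_h(x) = 16x³ - 16hx² + 2h - 1`. The proof shows that `Q > 0` wherever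
some coordinate `aᵢ ≤ h/3` has `f_h(aᵢ) > 0`, and that this region connects the given point to
`(1/6, 1/4, 1/3)`.

**Positivity.** Since `f_h` decreases on `[0, h/3]`, one may take `aᵢ = x` to be the smallest
coordinate (`Qpoly_pos`). Put `ε = f_h(x)`, `σ = h - 3x` and `w = (y - x)(z - x)`, so that
`0 ≤ w ≤ σ²/4`. With `2h - 1` as an extra variable of weight three `Q` is weighted homogeneous
(`homQ_scale`), hence `Q = σ¹² · coreQ (x/σ) (w/σ²) (ε/σ³)`. The identity
`32h³ - 54h + 27 = (4h - 3)²(2h + 3)` bounds `ε/σ³` by the quadratic polynomial `capM (x/σ)`.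
Under these bounds `coreQ` dominates a quadratic form in `(e, w)` whose discriminant is negative
(`disc_pos`), so it is positive (`coreQ_pos`, `Qpoly_pos_of_min`).

**Connectedness.** From a point with `f_h(aᵢ) > 0` and `aᵢ < h/3`, increase `h` to `3/4` keeping `aᵢ`
fixed, which increases `f_h(aᵢ)`; inside the plane `h = 3/4` the condition on `aᵢ` is `aᵢ < 1/4`,
which is convex. Both moves take place in convex subsets of the complement of `Ω`
(`mem_component_step`), and the three half-planes `aᵢ < 1/4` overlap pairwise inside the cube.
-/


noncomputable section

/-! ### Positivity of the discriminant polynomial -/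

/-- Upper bound for `ε / σ³` in terms of `X = x / σ`, coming from `2h - 1 ≤ 32 h³ / 27`. -/
def capM (x : ℝ) : ℝ := 16 * x ^ 2 + 32 / 3 * x + 32 / 27

/-- Lower bound for the factor of `e³` in `coreQ`: in that factor `-e` is replaced by `-capM x`. -/
def coefA (x w : ℝ) : ℝ := 48 * x ^ 2 + 160 / 3 * x + 400 / 27 - 64 * x * w - 40 * w

/-- The part of `coreQ` of degree two in `e`, divided by `-e² w`. -/
def coefB (x w : ℝ) : ℝ :=
  4608 * x ^ 4 + 7680 * x ^ 3 + 4224 * x ^ 2 + 768 * x + 208 * w - 64 * w ^ 2 - 768 * x ^ 2 * w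

/-- The part of `coreQ` free of `e`, divided by `w²`. -/
def coefG (x w : ℝ) : ℝ :=
  110592 * x ^ 4 * (2 * x + 1) ^ 4
    + w * (589824 * x ^ 6 + 917504 * x ^ 5 + 475136 * x ^ 4 + 81920 * x ^ 3)
    + w ^ 2 * (65536 * x ^ 4 + 65536 * x ^ 3 + 16384 * x ^ 2)

/-- The part of `coreQ` of degree one in `e`, divided by `e w²`. -/
def coefH (x w : ℝ) : ℝ :=
  147456 * x ^ 5 + 215040 * x ^ 4 + 104448 * x ^ 3 + 16896 * x ^ 2
    + w * (40960 * x ^ 3 + 43008 * x ^ 2 + 11264 * x) + w ^ 2 * (4096 * x + 2048)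

/-- `Q` in normalised coordinates: with `x` the smallest of the three variables, the others being
`x + σU` and `x + σ(1-U)`, and `2h - 1 = 16 x² (h - x) + ε`, one has
`Q = σ ^ 12 * coreQ (x / σ) (U (1 - U)) (ε / σ³)`. -/
def coreQ (x w e : ℝ) : ℝ :=
  e ^ 3 * (64 * x ^ 2 + 64 * x + 16 - e - 64 * x * w - 40 * w) - e ^ 2 * w * coefB x w
    + w ^ 2 * (e * coefH x w + coefG x w)

/-- The discriminant of the quadratic form `M A e² - M B e w + (G + M H) w²` is negative for positive `w`.
As a polynomial in `x` the difference of the two sides has coefficients that are positive for `0 < w ≤ 1/4`. -/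
lemma disc_pos {x w : ℝ} (hx : 0 ≤ x) (hw : 0 < w) (hw4 : w ≤ 1 / 4) :
    capM x * coefB x w ^ 2 < 4 * coefA x w * (coefG x w + capM x * coefH x w) := by
  -- The coefficients `cₖ` below become affine in `w` after these bounds on the powers of `w`.
  have h2 : w ^ 2 ≤ w / 4 := by nlinarith
  have h3 : w ^ 3 ≤ w / 16 := by nlinarith
  have h4 : w ^ 4 ≤ w / 64 := by nlinarith
  have c0 : 0 < w ^ 2 * (-3538944 * w ^ 2 - 260112384 * w + 67477504) :=
    mul_pos (pow_pos hw 2) (by linarith)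
  have c1 : 0 ≤ w * (-31850496 * w ^ 3 - 3360227328 * w ^ 2 - 277700608 * w + 300679168) :=
    mul_nonneg hw.le (by linarith)
  have c2 : 0 ≤ -47775744 * w ^ 4 - 15586394112 * w ^ 3 - 12945199104 * w ^ 2
      + 3130392576 * w + 355467264 := by
    linarith
  have c3 : 0 ≤ -33379319808 * w ^ 3 - 89160155136 * w ^ 2 + 3392405504 * w + 6055526400 := by
    linarith
  have c4 : 0 ≤ -33251917824 * w ^ 3 - 276352598016 * w ^ 2 - 80319283200 * w + 42740219904 := by
    linarith
  have c5 : 0 ≤ -12230590464 * w ^ 3 - 442084884480 * w ^ 2 - 465887821824 * w + 163433152512 := by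
    linarith
  have c6 : 0 ≤ -353158299648 * w ^ 2 - 1186813181952 * w + 367724593152 := by
    linarith
  have c7 : 0 ≤ -110075314176 * w ^ 2 - 1614437941248 * w + 488714010624 := by
    linarith
  have c8 : 0 ≤ -1142031384576 * w + 356215947264 := by
    linarith
  have c9 : 0 ≤ -330225942528 * w + 110075314176 := by
    linarith
  have key : 729 * (4 * coefA x w * (coefG x w + capM x * coefH x w) - capM x * coefB x w ^ 2) =
      (w ^ 2 * (-3538944 * w ^ 2 - 260112384 * w + 67477504)) * x ^ 0
      + (w * (-31850496 * w ^ 3 - 3360227328 * w ^ 2 - 277700608 * w + 300679168)) * x ^ 1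
      + (-47775744 * w ^ 4 - 15586394112 * w ^ 3 - 12945199104 * w ^ 2
        + 3130392576 * w + 355467264) * x ^ 2
      + (-33379319808 * w ^ 3 - 89160155136 * w ^ 2 + 3392405504 * w + 6055526400) * x ^ 3
      + (-33251917824 * w ^ 3 - 276352598016 * w ^ 2 - 80319283200 * w + 42740219904) * x ^ 4
      + (-12230590464 * w ^ 3 - 442084884480 * w ^ 2 - 465887821824 * w + 163433152512) * x ^ 5
      + (-353158299648 * w ^ 2 - 1186813181952 * w + 367724593152) * x ^ 6
      + (-110075314176 * w ^ 2 - 1614437941248 * w + 488714010624) * x ^ 7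
      + (-1142031384576 * w + 356215947264) * x ^ 8
      + (-330225942528 * w + 110075314176) * x ^ 9 := by
    unfold capM coefA coefB coefG coefH
    ring
  have hpos := add_pos_of_pos_of_nonneg (add_pos_of_pos_of_nonneg
    (add_pos_of_pos_of_nonneg (add_pos_of_pos_of_nonneg (add_pos_of_pos_of_nonneg
    (add_pos_of_pos_of_nonneg (add_pos_of_pos_of_nonneg (add_pos_of_pos_of_nonneg
    (add_pos_of_pos_of_nonneg (mul_pos c0 (show (0 : ℝ) < x ^ 0 by simp))
    (mul_nonneg c1 (pow_nonneg hx 1)))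
    (mul_nonneg c2 (pow_nonneg hx 2))) (mul_nonneg c3 (pow_nonneg hx 3)))
    (mul_nonneg c4 (pow_nonneg hx 4))) (mul_nonneg c5 (pow_nonneg hx 5)))
    (mul_nonneg c6 (pow_nonneg hx 6))) (mul_nonneg c7 (pow_nonneg hx 7)))
    (mul_nonneg c8 (pow_nonneg hx 8))) (mul_nonneg c9 (pow_nonneg hx 9))
  rw [← key] at hpos
  linarith

lemma coreQ_pos {x w e : ℝ} (hx : 0 ≤ x) (hw : 0 ≤ w) (hw4 : w ≤ 1 / 4) (he : 0 < e)
    (heM : e ≤ capM x) : 0 < coreQ x w e := by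
  have hM : 0 < capM x := he.trans_le heM
  have hA : 0 < coefA x w := by
    unfold coefA
    nlinarith [mul_nonneg hx (sub_nonneg.2 hw4), sq_nonneg x]
  have hG : 0 ≤ coefG x w := by
    unfold coefG
    positivity
  rcases hw.eq_or_lt with h0 | hwpos
  · -- For `w = 0` only the `e³`-term is left.
    have h1 : coreQ x w e = e ^ 3 * (coefA x w + (capM x - e)) := by
      unfold coreQ coefA capM
      rw [← h0]
      ring
    rw [h1]
    have := sub_nonneg.2 heM
    positivity
  · have hD := disc_pos hx hwpos hw4
    -- Completing the square.
    have hform : 0 < e ^ 2 * capM x * coefA x w - e * w * capM x * coefB x w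
        + w ^ 2 * (coefG x w + capM x * coefH x w) := by
      have h1 : 0 < 4 * coefA x w * (e ^ 2 * capM x * coefA x w - e * w * capM x * coefB x w
          + w ^ 2 * (coefG x w + capM x * coefH x w)) := by
        have h2 : 4 * coefA x w * (e ^ 2 * capM x * coefA x w - e * w * capM x * coefB x w
          + w ^ 2 * (coefG x w + capM x * coefH x w)) =
          capM x * (2 * coefA x w * e - w * coefB x w) ^ 2
          + w ^ 2 * (4 * coefA x w * (coefG x w + capM x * coefH x w)
            - capM x * coefB x w ^ 2) := by ring
        rw [h2]
        exact add_pos_of_nonneg_of_pos (mul_nonneg hM.le (sq_nonneg _))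
          (mul_pos (pow_pos hwpos 2) (sub_pos.2 hD))
      exact pos_of_mul_pos_right h1 (by positivity)
    -- The remainder of `M * coreQ` beyond the quadratic form carries the factor `capM x - e ≥ 0`.
    have hsplit : capM x * coreQ x w e = e * (e ^ 2 * capM x * coefA x w
        - e * w * capM x * coefB x w + w ^ 2 * (coefG x w + capM x * coefH x w))
        + (capM x - e) * (e ^ 3 * capM x + w ^ 2 * coefG x w) := by
      have h64 : 64 * x ^ 2 + 64 * x + 16 - e - 64 * x * w - 40 * w
          = coefA x w + (capM x - e) := by
        unfold coefA capM
        ring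
      rw [coreQ, h64]
      ring
    refine pos_of_mul_pos_right (a := capM x) ?_ hM.le
    rw [hsplit]
    have := sub_nonneg.2 heM
    positivity

/-- `Q` written in `h = s₁`, `b = s₂`, `c = s₃` and `t = 2 s₁ - 1`; it is then weighted homogeneous
of degree `12`, the variables having weights `1, 2, 3, 3`. -/
def homQ (h b c t : ℝ) : ℝ :=
  (t + 4 * c) * (16 * h ^ 3 * t ^ 2 - (t + 4 * c) * (t - 32 * c) ^ 2)
    - 8 * h * (t + 4 * c) * (t - 32 * c) * (5 * t + 32 * c) * b
    - 16 * h ^ 2 * (13 * t ^ 2 + 320 * t * c + 1024 * c ^ 2) * b ^ 2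
    + 64 * t * (t - 32 * c) * b ^ 3 + 2048 * h * t * b ^ 4

lemma Qpoly_eq_homQ (x y z : ℝ) : Qpoly x y z =
    homQ (x + y + z) (x * y + x * z + y * z) (x * y * z) (2 * (x + y + z) - 1) := by
  unfold Qpoly homQ
  ring

lemma homQ_scale (g h b c t : ℝ) :
    homQ (g * h) (g ^ 2 * b) (g ^ 3 * c) (g ^ 3 * t) = g ^ 12 * homQ h b c t := by
  unfold homQ
  ring

lemma homQ_eq_coreQ (x w e : ℝ) :
    homQ (3 * x + 1) (3 * x ^ 2 + 2 * x + w) (x ^ 3 + x ^ 2 + x * w)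
      (e + 16 * x ^ 2 * (2 * x + 1)) = coreQ x w e := by
  unfold homQ coreQ coefB coefG coefH
  ring

/-- If the smallest coordinate `x` satisfies `f_h(x) > 0`, where `h = x + y + z`, then `Q > 0`. -/
lemma Qpoly_pos_of_min {x y z : ℝ} (hx : 0 ≤ x) (hxy : x ≤ y) (hxz : x ≤ z)
    (hf : 0 < 16 * x ^ 3 - 16 * (x + y + z) * x ^ 2 + 2 * (x + y + z) - 1) :
    0 < Qpoly x y z := by
  -- `32 h³ / 27 - (2h - 1)` is a nonnegative multiple of `(4h - 3)²`.
  have hcap : 2 * (x + y + z) - 1 ≤ 32 / 27 * (x + y + z) ^ 3 := by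
    have h1 : 0 ≤ (4 * (x + y + z) - 3) ^ 2 * (2 * (x + y + z) + 3) :=
      mul_nonneg (sq_nonneg _) (by linarith)
    linarith
  obtain ⟨g, hg⟩ : ∃ g, g = y + z - 2 * x := ⟨_, rfl⟩
  have hg0 : 0 ≤ g := by linarith
  have hgpos : 0 < g := by
    rcases hg0.eq_or_lt with h0 | h0
    · -- If `x = y = z` then `f_h(x) = 2h - 1 - 32 h³ / 27 ≤ 0`.
      have hsum : x + y + z = 3 * x := by linarith
      rw [hsum] at hf hcap
      linarith
    · exact h0
  obtain ⟨X, hX⟩ : ∃ X, x = g * X := ⟨x / g, by field_simp⟩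
  obtain ⟨U, hU⟩ : ∃ U, y - x = g * U := ⟨(y - x) / g, by field_simp⟩
  obtain ⟨E, hE⟩ : ∃ E, 16 * x ^ 3 - 16 * (x + y + z) * x ^ 2 + 2 * (x + y + z) - 1 = g ^ 3 * E :=
    ⟨(16 * x ^ 3 - 16 * (x + y + z) * x ^ 2 + 2 * (x + y + z) - 1) / g ^ 3, by field_simp⟩
  have hy : y = g * (X + U) := by linarith
  have hz : z = g * (X + 1 - U) := by linarith
  have hX0 : 0 ≤ X := nonneg_of_mul_nonneg_right (hX ▸ hx) hgpos
  have hU0 : 0 ≤ U := nonneg_of_mul_nonneg_right (by linarith) hgpos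
  have hU1 : 0 ≤ 1 - U := nonneg_of_mul_nonneg_right (a := g) (by linarith) hgpos
  have hE0 : 0 < E := pos_of_mul_pos_right (hE ▸ hf) (by positivity)
  have hs : x + y + z = g * (3 * X + 1) := by rw [hX, hy, hz]; ring
  have ht : 2 * (x + y + z) - 1 = g ^ 3 * (E + 16 * X ^ 2 * (2 * X + 1)) := by
    have h1 : 2 * (x + y + z) - 1 = g ^ 3 * E - 16 * x ^ 3 + 16 * (x + y + z) * x ^ 2 := by
      linarith
    rw [h1, hs, hX]
    ring
  have hEM : E ≤ capM X := by
    have h1 : g ^ 3 * (E + 16 * X ^ 2 * (2 * X + 1)) ≤ g ^ 3 * (32 / 27 * (3 * X + 1) ^ 3) := by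
      rw [← ht]
      refine hcap.trans_eq ?_
      rw [hs]
      ring
    have h2 := le_of_mul_le_mul_left h1 (by positivity)
    unfold capM
    linarith
  have hQ : Qpoly x y z = g ^ 12 * coreQ X (U * (1 - U)) E := by
    have hb : x * y + x * z + y * z = g ^ 2 * (3 * X ^ 2 + 2 * X + U * (1 - U)) := by
      rw [hX, hy, hz]; ring
    have hc : x * y * z = g ^ 3 * (X ^ 3 + X ^ 2 + X * (U * (1 - U))) := by
      rw [hX, hy, hz]; ring
    rw [Qpoly_eq_homQ, ht, hs, hb, hc, homQ_scale, homQ_eq_coreQ]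
  rw [hQ]
  refine mul_pos (by positivity) (coreQ_pos hX0 (mul_nonneg hU0 hU1) ?_ hE0 hEM)
  linarith [sq_nonneg (2 * U - 1)]

lemma Qpoly_swap12 (x y z : ℝ) : Qpoly y x z = Qpoly x y z := by
  unfold Qpoly
  ring

lemma Qpoly_swap13 (x y z : ℝ) : Qpoly z y x = Qpoly x y z := by
  unfold Qpoly
  ring

/-- `f_h` is decreasing on `[0, h/3]`, in the form needed to compare positivity. -/
lemma cubic_pos_of_le {h m x : ℝ} (hm : 0 ≤ m) (hmx : m ≤ x) (hx : 3 * x ≤ h)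
    (hf : 0 < 16 * x ^ 3 - 16 * h * x ^ 2 + 2 * h - 1) :
    0 < 16 * m ^ 3 - 16 * h * m ^ 2 + 2 * h - 1 := by
  have h1 : 0 ≤ (x - m) * (h * (x + m) - (x ^ 2 + x * m + m ^ 2)) := by
    refine mul_nonneg (sub_nonneg.2 hmx) ?_
    nlinarith [mul_nonneg (sub_nonneg.2 hx) (add_nonneg (hm.trans hmx) hm),
      mul_nonneg hm (sub_nonneg.2 hmx), mul_nonneg (hm.trans hmx) hm, sq_nonneg x, mul_nonneg (hm.trans hmx) (sub_nonneg.2 hmx)]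
  linarith

/-- `Q > 0` as soon as one coordinate `x ≤ h/3` satisfies `f_h(x) > 0`: the smallest coordinate then
has the same property. -/
lemma Qpoly_pos {x y z : ℝ} (hx : 0 ≤ x) (hy : 0 ≤ y) (hz : 0 ≤ z) (h3 : 3 * x ≤ x + y + z)
    (hf : 0 < 16 * x ^ 3 - 16 * (x + y + z) * x ^ 2 + 2 * (x + y + z) - 1) :
    0 < Qpoly x y z := by
  rcases le_total x y with hxy | hxy <;> rcases le_total x z with hxz | hxz
  · exact Qpoly_pos_of_min hx hxy hxz hf
  · rw [← Qpoly_swap13]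
    refine Qpoly_pos_of_min hz (by linarith) hxz ?_
    have := cubic_pos_of_le hz hxz h3 hf
    rwa [show z + y + x = x + y + z by ring]
  · rw [← Qpoly_swap12]
    refine Qpoly_pos_of_min hy hxy (by linarith) ?_
    have := cubic_pos_of_le hy hxy h3 hf
    rwa [show y + x + z = x + y + z by ring]
  · rcases le_total y z with hyz | hyz
    · rw [← Qpoly_swap12]
      refine Qpoly_pos_of_min hy hxy hyz ?_
      have := cubic_pos_of_le hy hxy h3 hf
      rwa [show y + x + z = x + y + z by ring]
    · rw [← Qpoly_swap13]
      refine Qpoly_pos_of_min hz hyz hxz ?_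
      have := cubic_pos_of_le hz hxz h3 hf
      rwa [show z + y + x = x + y + z by ring]

/-! ### Connecting paths -/

/-- The sum of the coordinates, as a linear map. -/
def sumL : (ℝ × ℝ × ℝ) →ₗ[ℝ] ℝ :=
  LinearMap.fst ℝ ℝ (ℝ × ℝ) + (LinearMap.fst ℝ ℝ ℝ).comp (LinearMap.snd ℝ ℝ (ℝ × ℝ))
    + (LinearMap.snd ℝ ℝ ℝ).comp (LinearMap.snd ℝ ℝ (ℝ × ℝ))

lemma sumL_apply (p : ℝ × ℝ × ℝ) : sumL p = p.1 + p.2.1 + p.2.2 := rfl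

lemma convex_cube : Convex ℝ cube :=
  (convex_Ioo (0 : ℝ) (1 / 2)).prod ((convex_Ioo (0 : ℝ) (1 / 2)).prod (convex_Ioo (0 : ℝ) (1 / 2)))

lemma mem_component_of_convex {F S : Set (ℝ × ℝ × ℝ)} {b q p : ℝ × ℝ × ℝ} (hS : Convex ℝ S)
    (hSF : S ⊆ F) (hqS : q ∈ S) (hpS : p ∈ S) (hq : q ∈ connectedComponentIn F b) :
    p ∈ connectedComponentIn F b := by
  rw [connectedComponentIn_eq hq]
  exact hS.isPreconnected.subset_connectedComponentIn hqS hSF hpS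

/-- Two convex steps connect a point `p` with `f_h(ℓ p) > 0` to a point `r` of the plane `h = 3/4`:
increasing `h` at constant `ℓ` until `h = 3/4`, then moving inside that plane. Here `ℓ` is to be one
of the coordinates. -/
lemma mem_component_step (l : (ℝ × ℝ × ℝ) →ₗ[ℝ] ℝ) {F : Set (ℝ × ℝ × ℝ)} {b p q r : ℝ × ℝ × ℝ}
    (hF : ∀ p ∈ cube, 3 * l p ≤ sumL p →
      0 < 16 * l p ^ 3 - 16 * sumL p * l p ^ 2 + 2 * sumL p - 1 → p ∈ F)
    (hl : ∀ p ∈ cube, 0 < l p)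
    (hp : p ∈ cube) (hp3 : 3 * l p ≤ sumL p) (hps : sumL p < 3 / 4)
    (hpf : 0 < 16 * l p ^ 3 - 16 * sumL p * l p ^ 2 + 2 * sumL p - 1)
    (hq : q ∈ cube) (hql : l q = l p) (hqs : sumL q = 3 / 4)
    (hr : r ∈ cube) (hrl : l r < 1 / 4) (hrs : sumL r = 3 / 4)
    (hrb : r ∈ connectedComponentIn F b) : p ∈ connectedComponentIn F b := by
  have hlp := hl p hp
  have hqb : q ∈ connectedComponentIn F b := by
    refine mem_component_of_convex (S := cube ∩ ({a | l a < 1 / 4} ∩ {a | sumL a = 3 / 4}))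
      (convex_cube.inter ((convex_halfSpace_lt l.isLinear _).inter
        (convex_hyperplane sumL.isLinear _))) ?_ ⟨hr, hrl, hrs⟩ ⟨hq, ?_, hqs⟩ hrb
    · rintro a ⟨ha, (hal : l a < 1 / 4), (has : sumL a = 3 / 4)⟩
      have h0 := hl a ha
      refine hF a ha (by linarith) ?_
      -- At `h = 3/4` the cubic factors, with the root `1/4`.
      have h1 : 0 < (1 - 4 * l a) * (1 + 4 * l a - 8 * l a ^ 2) :=
        mul_pos (by linarith) (by nlinarith)
      rw [has]
      linarith
    · show l q < 1 / 4
      linarith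
  refine mem_component_of_convex (S := cube ∩ ({a | l a = l p} ∩ {a | sumL p ≤ sumL a}))
    (convex_cube.inter ((convex_hyperplane l.isLinear _).inter
      (convex_halfSpace_ge sumL.isLinear _))) ?_ ⟨hq, hql, ?_⟩ ⟨hp, rfl, le_refl (sumL p)⟩ hqb
  · rintro a ⟨ha, (hal : l a = l p), (has : sumL p ≤ sumL a)⟩
    refine hF a ha (by linarith) ?_
    rw [hal]
    -- For fixed `x < 1/4` the value `f_h(x)` is increasing in `h`.
    have h1 : 0 ≤ (sumL a - sumL p) * (2 - 16 * l p ^ 2) :=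
      mul_nonneg (sub_nonneg.2 has) (by nlinarith)
    linarith
  · show sumL p ≤ sumL q
    linarith

/-- `a < x̃(h)` means `f_h(a) > 0`. -/
lemma cubic_pos_of_lt_root {h a xt : ℝ} (ha : 0 < a) (hlt : a < xt) (hxt : 3 * xt < h)
    (hroot : 16 * xt ^ 3 - 16 * h * xt ^ 2 + 2 * h - 1 = 0) :
    0 < 16 * a ^ 3 - 16 * h * a ^ 2 + 2 * h - 1 := by
  have h1 : 0 < (xt - a) * (h * (xt + a) - (xt ^ 2 + xt * a + a ^ 2)) := by
    refine mul_pos (sub_pos.2 hlt) ?_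
    nlinarith [mul_pos (sub_pos.2 hxt) (add_pos (ha.trans hlt) ha), mul_pos ha (sub_pos.2 hlt),
      mul_pos (ha.trans hlt) ha, mul_pos (ha.trans hlt) (sub_pos.2 hlt)]
  linarith

theorem stmt7 (h a₁ a₂ a₃ : ℝ) (hh : h ∈ Set.Ioo (1 / 2 : ℝ) (3 / 4))
    (ha : (a₁, a₂, a₃) ∈ cube) (hsum : a₁ + a₂ + a₃ = h)
    (xt : ℝ) (hxt : xt ∈ Set.Ioo (0 : ℝ) (h / 3))
    (hroot : 16 * xt ^ 3 - 16 * h * xt ^ 2 + 2 * h - 1 = 0)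
    (hlt : a₁ < xt ∨ a₂ < xt ∨ a₃ < xt) :
    (a₁, a₂, a₃) ∈ O₃ := by
  obtain ⟨hh1, hh2⟩ := hh
  obtain ⟨hx0, hx3⟩ := hxt
  have hx3' : 3 * xt < h := by linarith
  have hpos1 : 0 < a₁ := ha.1.1
  have hpos2 : 0 < a₂ := ha.2.1.1
  have hpos3 : 0 < a₃ := ha.2.2.1
  have hF1 : ∀ p ∈ cube, 3 * p.1 ≤ sumL p →
      0 < 16 * p.1 ^ 3 - 16 * sumL p * p.1 ^ 2 + 2 * sumL p - 1 → p ∈ cube \ OmegaSet := by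
    intro p hp h3 hf
    refine ⟨hp, ne_of_gt (Qpoly_pos hp.1.1.le hp.2.1.1.le hp.2.2.1.le h3 hf)⟩
  have hF2 : ∀ p ∈ cube, 3 * p.2.1 ≤ sumL p →
      0 < 16 * p.2.1 ^ 3 - 16 * sumL p * p.2.1 ^ 2 + 2 * sumL p - 1 → p ∈ cube \ OmegaSet := by
    intro p hp h3 hf
    have hs : sumL p = p.2.1 + p.1 + p.2.2 := by rw [sumL_apply]; ring
    rw [hs] at h3 hf
    refine ⟨hp, ne_of_gt ?_⟩
    rw [← Qpoly_swap12]
    exact Qpoly_pos hp.2.1.1.le hp.1.1.le hp.2.2.1.le h3 hf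
  have hF3 : ∀ p ∈ cube, 3 * p.2.2 ≤ sumL p →
      0 < 16 * p.2.2 ^ 3 - 16 * sumL p * p.2.2 ^ 2 + 2 * sumL p - 1 → p ∈ cube \ OmegaSet := by
    intro p hp h3 hf
    have hs : sumL p = p.2.2 + p.2.1 + p.1 := by rw [sumL_apply]; ring
    rw [hs] at h3 hf
    refine ⟨hp, ne_of_gt ?_⟩
    rw [← Qpoly_swap13]
    exact Qpoly_pos hp.2.2.1.le hp.2.1.1.le hp.1.1.le h3 hf
  have hbase : ((1 / 6, 1 / 4, 1 / 3) : ℝ × ℝ × ℝ) ∈ O₃ := by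
    refine mem_connectedComponentIn (hF1 _ ?_ ?_ ?_) <;>
      norm_num [cube, sumL_apply]
  -- Any point of the plane `h = 3/4` with first coordinate `1/6` is in `O₃`; two such points
  -- serve as targets for the second and third coordinate.
  have hplane : ∀ y z : ℝ, y ∈ Set.Ioo (0 : ℝ) (1 / 2) → z ∈ Set.Ioo (0 : ℝ) (1 / 2) →
      1 / 6 + y + z = 3 / 4 → ((1 / 6, y, z) : ℝ × ℝ × ℝ) ∈ O₃ := by
    intro y z hy hz hyz
    refine mem_component_of_convex
      (S := cube ∩ ({a | a.1 = 1 / 6} ∩ {a | sumL a = 3 / 4}))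
      (convex_cube.inter ((convex_hyperplane (LinearMap.fst ℝ ℝ (ℝ × ℝ)).isLinear _).inter
        (convex_hyperplane sumL.isLinear _))) ?_ (q := (1 / 6, 1 / 4, 1 / 3)) ?_ ?_ hbase
    · rintro a ⟨ha, (ha1 : a.1 = 1 / 6), (has : sumL a = 3 / 4)⟩
      refine hF1 a ha ?_ ?_ <;> rw [ha1, has] <;> norm_num
    · refine ⟨?_, ?_, ?_⟩ <;> norm_num [cube, sumL_apply]
    · refine ⟨⟨by norm_num, hy, hz⟩, rfl, hyz⟩
  rcases hlt with hlt | hlt | hlt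
  · have hf := cubic_pos_of_lt_root hpos1 hlt hx3' hroot
    refine mem_component_step (LinearMap.fst ℝ ℝ (ℝ × ℝ)) hF1 (fun p hp => hp.1.1) ha ?_ ?_ ?_
      (q := (a₁, (3 / 4 - a₁) / 2, (3 / 4 - a₁) / 2)) ?_ ?_ ?_
      (r := (1 / 6, 1 / 4, 1 / 3)) ?_ ?_ ?_ hbase
    case refine_4 => exact ⟨ha.1, ⟨by linarith, by linarith⟩, ⟨by linarith, by linarith⟩⟩
    all_goals try simp only [sumL_apply, LinearMap.fst_apply, hsum]
    all_goals first | exact hf | linarith | norm_num [cube]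
  · have hf := cubic_pos_of_lt_root hpos2 hlt hx3' hroot
    refine mem_component_step ((LinearMap.fst ℝ ℝ ℝ).comp (LinearMap.snd ℝ ℝ (ℝ × ℝ)))
      hF2 (fun p hp => hp.2.1.1) ha ?_ ?_ ?_
      (q := ((3 / 4 - a₂) / 2, a₂, (3 / 4 - a₂) / 2)) ?_ ?_ ?_
      (r := (1 / 6, 1 / 6, 5 / 12)) ?_ ?_ ?_
      (hplane _ _ (by norm_num) (by norm_num) (by norm_num))
    case refine_4 => exact ⟨⟨by linarith, by linarith⟩, ha.2.1, ⟨by linarith, by linarith⟩⟩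
    all_goals try simp only [sumL_apply, LinearMap.comp_apply, LinearMap.fst_apply,
      LinearMap.snd_apply, hsum]
    all_goals first | exact hf | linarith | norm_num [cube]
  · have hf := cubic_pos_of_lt_root hpos3 hlt hx3' hroot
    refine mem_component_step ((LinearMap.snd ℝ ℝ ℝ).comp (LinearMap.snd ℝ ℝ (ℝ × ℝ)))
      hF3 (fun p hp => hp.2.2.1) ha ?_ ?_ ?_
      (q := ((3 / 4 - a₃) / 2, (3 / 4 - a₃) / 2, a₃)) ?_ ?_ ?_
      (r := (1 / 6, 5 / 12, 1 / 6)) ?_ ?_ ?_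
      (hplane _ _ (by norm_num) (by norm_num) (by norm_num))
    case refine_4 => exact ⟨⟨by linarith, by linarith⟩, ⟨by linarith, by linarith⟩, ha.2.2⟩
    all_goals try simp only [sumL_apply, LinearMap.comp_apply, LinearMap.snd_apply, hsum]
    all_goals first | exact hf | linarith | norm_num [cube]
end
end
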